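/- There exist universal constants C₁, C₂, C₃ > 0 such that the following holds. Let M ≥ 257 be an integer, Δ ≥ 4/(M−1), and let μ be an atomic measure on 𝕋 with minimum separation Δ(μ) ≥ Δ. Let y = 𝓕_M μ + z with ‖z‖_2 ≤ ε for some ε > 0, and let ν be any atomic measure on 𝕋 with ‖y − 𝓕_M ν‖_2 ≤ ε and ‖ν‖_TV ≤ ‖μ‖_TV (in particular, any atomic solution of min ‖ν'‖_TV subject to ‖y − 𝓕_M ν'‖_2 ≤ ε). Then 𝓔_1^M(μ,ν) ≤ C₁ε, 𝓔_2^M(μ,ν) ≤ C₂ M^{−2} ε, and 𝓔_3^M(μ,ν) ≤ C₃ε. -/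

import Mathlib

open scoped Real
open Complex

noncomputable section

/-- Wrap-around distance on `ℝ` (distance to the nearest integer). -/
def distT (t : ℝ) : ℝ := ⨅ n : ℤ, |t - (n : ℝ)|

/-- Euclidean norm of a complex vector. -/
def norm2 {n : ℕ} (y : Fin n → ℂ) : ℝ := Real.sqrt (∑ i, ‖y i‖ ^ 2)

/-- Total variation norm of the atomic measure with amplitudes `a`. -/
def tvNorm {R : ℕ} (a : Fin R → ℂ) : ℝ := ∑ j, ‖a j‖

/-- First `M` Fourier coefficients of the atomic measure `∑ j, a j • δ_{t j}`. -/
def fourierCoeffs (M : ℕ) {R : ℕ} (a : Fin R → ℂ) (t : Fin R → ℝ) : Fin M → ℂ :=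
  fun k => ∑ j, a j * Complex.exp (-2 * (Real.pi : ℂ) * Complex.I * ((k : ℕ) : ℂ) * ((t j : ℝ) : ℂ))

/-- The function `w(t) = ∑_{k<λ} β^{-k} e^{-2πikt}`. -/
def wFun (β : ℝ) (lam : ℕ) (t : ℝ) : ℂ :=
  ∑ k ∈ Finset.range lam, ((β : ℂ))⁻¹ ^ k * Complex.exp (-2 * (Real.pi : ℂ) * Complex.I * (k : ℂ) * (t : ℂ))

/-- Condensation matrix `V = [I_m, β⁻¹ I_m, …, β^{-(λ-1)} I_m]`. -/
def Vmat (β : ℝ) (m lam : ℕ) : Matrix (Fin m) (Fin (lam * m)) ℂ :=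
  Matrix.of fun i j => if (j : ℕ) % m = (i : ℕ) then ((β : ℂ))⁻¹ ^ ((j : ℕ) / m) else 0

/-- Noise-shaping matrix `H` with `1` on the diagonal and `-β` on the `m`-th subdiagonal. -/
def Hmat (β : ℝ) (m M : ℕ) : Matrix (Fin M) (Fin M) ℂ :=
  Matrix.of fun j k => if (j : ℕ) = (k : ℕ) then 1 else if (j : ℕ) = (k : ℕ) + m then -(β : ℂ) else 0

/-- `𝒵_K = {-K+1, -K+3, …, K-1}`. -/
def ZK (K : ℕ) : Set ℤ := {n | ∃ k : ℕ, k < K ∧ n = -(K : ℤ) + 1 + 2 * (k : ℤ)}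

/-- The Cartesian alphabet `𝒜 = δ(𝒵_K + i𝒵_K)`. -/
def alphabet (K : ℕ) (δ : ℝ) : Set ℂ :=
  {z | ∃ a b : ℤ, a ∈ ZK K ∧ b ∈ ZK K ∧ z = (δ : ℂ) * ((a : ℂ) + (b : ℂ) * Complex.I)}

/-- `L` is a Lipschitz bound for `φ` with respect to the wrap-around distance. -/
def LipBnd (φ : ℝ → ℂ) (L : ℝ) : Prop := ∀ s t : ℝ, ‖φ s - φ t‖ ≤ L * distT (s - t)

/-- Lipschitz seminorm `|φ|_Lip` with respect to the wrap-around distance. -/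
def lipSemi (φ : ℝ → ℂ) : ℝ := sInf {L : ℝ | 0 ≤ L ∧ LipBnd φ L}

/-- Sup norm of `φ`. -/
def supNorm (φ : ℝ → ℂ) : ℝ := sSup {x : ℝ | ∃ t : ℝ, x = ‖φ t‖}

/-- Lipschitz norm `‖φ‖_Lip = max(‖φ‖_∞, |φ|_Lip)`. -/
def lipNorm (φ : ℝ → ℂ) : ℝ := max (supNorm φ) (lipSemi φ)

/-- Dual Lipschitz norm `‖ρ‖_{Lip*}` of the atomic measure `ρ = ∑ j, u j • δ_{r j}`. -/
def lipStar {R : ℕ} (u : Fin R → ℂ) (r : Fin R → ℝ) : ℝ :=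
  sSup {x : ℝ | ∃ φ : ℝ → ℂ, lipNorm φ ≤ 1 ∧ x = ‖∑ j, u j * φ (r j)‖}

/-- `𝓔_Lip(ρ,ν)` for atomic measures. -/
def ELip {R S : ℕ} (u : Fin R → ℂ) (r : Fin R → ℝ) (v : Fin S → ℂ) (s : Fin S → ℝ) : ℝ :=
  sSup {x : ℝ | ∃ φ : ℝ → ℂ, lipNorm φ ≤ 1 ∧
    x = ‖(∑ j, u j * φ (r j)) - (∑ k, v k * φ (s k))‖}

open scoped Classical in
/-- The neighborhood index set `𝓘_j^M`. -/
def nearIdx {R S : ℕ} (r : Fin R → ℝ) (s : Fin S → ℝ) (M : ℕ) (j : Fin R) : Finset (Fin S) :=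
  Finset.univ.filter fun k => distT (r j - s k) ≤ 0.3298 / ((M : ℝ) - 1)

open scoped Classical in
/-- The residual index set `𝓘_0^M`. -/
def farIdx {R S : ℕ} (r : Fin R → ℝ) (s : Fin S → ℝ) (M : ℕ) : Finset (Fin S) :=
  Finset.univ.filter fun k => ∀ j : Fin R, k ∉ nearIdx r s M j

/-- Amplitude error `𝓔_1^M(ρ,ν)`. -/
def E1 {R S : ℕ} (u : Fin R → ℂ) (r : Fin R → ℝ) (v : Fin S → ℂ) (s : Fin S → ℝ) (M : ℕ) : ℝ :=
  ⨆ j : Fin R, ‖u j - ∑ k ∈ nearIdx r s M j, v k‖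

/-- Support error `𝓔_2^M(ρ,ν)`. -/
def E2 {R S : ℕ} (u : Fin R → ℂ) (r : Fin R → ℝ) (v : Fin S → ℂ) (s : Fin S → ℝ) (M : ℕ) : ℝ :=
  ∑ j : Fin R, ∑ k ∈ nearIdx r s M j, ‖v k‖ * distT (r j - s k) ^ 2

/-- Spurious-atom error `𝓔_3^M(ρ,ν)`. -/
def E3 {R S : ℕ} (u : Fin R → ℂ) (r : Fin R → ℝ) (v : Fin S → ℂ) (s : Fin S → ℝ) (M : ℕ) : ℝ :=
  ∑ k ∈ farIdx r s M, ‖v k‖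

/-- Mixed `ℓ∞ + ℓ²` error `𝓔^π_{∞,2}(ρ,ν)` for a permutation `π`. -/
def EInf2 {S : ℕ} (u : Fin S → ℂ) (r : Fin S → ℝ) (v : Fin S → ℂ) (s : Fin S → ℝ)
    (σ : Equiv.Perm (Fin S)) : ℝ :=
  (⨆ j, distT (r j - s (σ j))) +
    Real.sqrt (∑ j, ‖u j - v (σ j)‖ ^ 2) / Real.sqrt (∑ j, ‖u j‖ ^ 2)

end

/-!
Duality turns the theorem into the construction of two low-frequency polynomials on the circle.
One takes prescribed unimodular values at the points `t j` and has modulus `1 - c (M d)²` at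
distance `d` from them, so that pairing it with `μ` and `ν` bounds `∑ |b k| w (s k)`, where the
weight `w` vanishes only at the support. The other is `1 + O((M d)²)` near one point `t j₀`,
`O((M d)²)` near the others and bounded everywhere, so it reads off the amplitude `a j₀` up to an
error controlled by the same weighted sum.

Both are sums of shifted copies of a kernel and of a slope kernel whose coefficients solve a
perturbed identity system. The kernels are periodizations of `sinc⁴` and `y · sinc⁴`. All estimates
can therefore be made on the line, where they reduce to explicit power tails, while the partial
fractions of `cos / sin³` and `1 / sin⁴` show that the periodizations are trigonometric polynomials.
-/

noncomputable section

/-! ### Lattice sums -/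

section

lemma sub_intCast_ne_zero_of_sin_ne_zero {x : ℝ} (hx : Real.sin (π * x) ≠ 0) (m : ℤ) :
    x - m ≠ 0 := fun h =>
  Real.sin_ne_zero_iff.1 hx m (by rw [sub_eq_zero.1 h, mul_comm])

lemma norm_sq_fourierCoeffOn_exp {x : ℝ} (hx : Real.sin (π * x) ≠ 0) (m : ℤ) :
    ‖fourierCoeffOn zero_lt_one (fun s : ℝ => exp (2 * π * I * x * s)) m‖ ^ 2 =
      Real.sin (π * x) ^ 2 / π ^ 2 * (1 / (x - m) ^ 2) := by
  have hxm : (x : ℂ) - m ≠ 0 := by exact_mod_cast sub_intCast_ne_zero_of_sin_ne_zero hx m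
  have hfreq : 2 * π * I * (x - m) ≠ 0 := mul_ne_zero two_pi_I_ne_zero hxm
  have hintegrand (s : ℝ) : fourier (-m) (s : AddCircle ((1 : ℝ) - 0)) • exp (2 * π * I * x * s) =
      exp (2 * π * I * (x - m) * s) := by
    rw [fourier_coe_apply, smul_eq_mul, ← exp_add]
    congr 1
    push_cast
    ring
  have hperiod : exp (2 * π * I * (x - m)) = exp (I * (2 * (π * x) : ℝ)) := by
    rw [exp_eq_exp_iff_exists_int]
    exact ⟨-m, by push_cast; ring⟩
  rw [fourierCoeffOn_eq_integral]
  simp only [hintegrand, integral_exp_mul_complex hfreq]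
  have hnorm : ‖2 * (π : ℂ) * I * ((x : ℂ) - (m : ℂ))‖ = 2 * π * |x - m| := by
    rw [norm_mul, ← ofReal_intCast, ← ofReal_sub, norm_real, Real.norm_eq_abs]
    simp [Real.pi_pos.le]
  rw [ofReal_one, mul_one, ofReal_zero, mul_zero, exp_zero, hperiod, sub_zero, div_one, one_smul,
    norm_div, hnorm, norm_exp_I_mul_ofReal_sub_one, mul_div_cancel_left₀ _ two_ne_zero]
  simp only [Real.norm_eq_abs, div_pow, mul_pow, sq_abs]
  field_simp

open MeasureTheory in
/-- Parseval for `s ↦ exp (2πixs)` on `[0, 1]`. -/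
lemma hasSum_one_div_sub_int_sq {x : ℝ} (hx : Real.sin (π * x) ≠ 0) :
    HasSum (fun m : ℤ => 1 / (x - m) ^ 2) (π ^ 2 / Real.sin (π * x) ^ 2) := by
  have hnorm (s : ℝ) : ‖exp (2 * π * I * x * s)‖ = 1 := by
    rw [show 2 * π * I * x * s = ((2 * π * x * s : ℝ) : ℂ) * I by push_cast; ring,
      norm_exp_ofReal_mul_I]
  have hL2 : MemLp (fun s : ℝ => exp (2 * π * I * x * s)) 2 (volume.restrict (Set.Ioc 0 1)) :=
    .of_bound (Continuous.aestronglyMeasurable (by fun_prop)) 1 (.of_forall fun s => (hnorm s).le)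
  have hparseval := hasSum_sq_fourierCoeffOn zero_lt_one hL2
  simp only [norm_sq_fourierCoeffOn_exp hx, hnorm, one_pow, intervalIntegral.integral_const,
    sub_zero, inv_one, one_smul] at hparseval
  have hscale : Real.sin (π * x) ^ 2 / π ^ 2 * (π ^ 2 / Real.sin (π * x) ^ 2) = 1 := by field_simp
  exact (hasSum_mul_left_iff (left_ne_zero_of_mul_eq_one hscale)).1 (hscale ▸ hparseval)

lemma summable_const_div_abs_add_one_pow {k : ℕ} (hk : 1 < k) (c : ℝ) :
    Summable fun m : ℤ => c / (|(m : ℝ)| + 1) ^ k := by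
  have hnat : Summable fun n : ℕ => c / ((n : ℝ) + 1) ^ k := by
    have := ((summable_nat_add_iff 1).2 (Real.summable_nat_pow_inv.2 hk)).mul_left c
    exact this.congr fun n => by push_cast; rw [div_eq_mul_inv]
  exact .of_nat_of_neg (hnat.congr fun n => by simp) (hnat.congr fun n => by simp)

lemma exists_mul_abs_add_one_le_abs_sub_int {x : ℝ} (hx : Real.sin (π * x) ≠ 0) :
    ∃ δ > 0, ∃ c > 0, ∀ y ∈ Metric.ball x δ, ∀ m : ℤ, c * (|(m : ℝ)| + 1) ≤ |y - m| := by
  set δ := |x - round x| / 2 with hδ_def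
  have hδ : 0 < δ := half_pos (abs_pos.2 (sub_intCast_ne_zero_of_sin_ne_zero hx (round x)))
  refine ⟨δ, hδ, (1 + (|x| + δ + 1) / δ)⁻¹, by positivity, fun y hy m => ?_⟩
  rw [Metric.mem_ball, Real.dist_eq] at hy
  have hδ_le : δ ≤ |y - m| := by
    have h₁ := round_le x m
    have h₂ := abs_sub_le x y m
    rw [abs_sub_comm x y] at h₂
    linarith
  have hm_le : |(m : ℝ)| ≤ |x| + δ + |y - m| := by
    calc |(m : ℝ)| = |x + (y - x) - (y - m)| := by ring_nf
      _ ≤ |x| + |y - x| + |y - m| := (abs_sub _ _).trans (by gcongr; exact abs_add_le _ _)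
      _ ≤ |x| + δ + |y - m| := by gcongr
  rw [inv_mul_le_iff₀ (by positivity), add_mul, div_mul_eq_mul_div, one_mul]
  have : |x| + δ + 1 ≤ (|x| + δ + 1) * |y - m| / δ := by
    rw [le_div_iff₀ hδ]
    gcongr
  linarith

lemma summable_one_div_sub_int_pow {x : ℝ} (hx : Real.sin (π * x) ≠ 0) {k : ℕ} (hk : 1 < k) :
    Summable fun m : ℤ => 1 / (x - m) ^ k := by
  obtain ⟨δ, hδ, c, hc, hbound⟩ := exists_mul_abs_add_one_le_abs_sub_int hx
  refine .of_norm_bounded (summable_const_div_abs_add_one_pow hk (1 / c ^ k)) fun m => ?_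
  rw [Real.norm_eq_abs, abs_div, abs_one, abs_pow, div_div, ← mul_pow]
  gcongr
  exact hbound x (Metric.mem_ball_self hδ) m

lemma hasDerivAt_tsum_one_div_sub_int_pow {x : ℝ} (hx : Real.sin (π * x) ≠ 0) {k : ℕ} (hk : 1 < k) :
    HasDerivAt (fun z : ℝ => ∑' m : ℤ, 1 / (z - m) ^ k)
      (∑' m : ℤ, -k * (1 / (x - m) ^ (k + 1))) x := by
  obtain ⟨δ, hδ, c, hc, hbound⟩ := exists_mul_abs_add_one_le_abs_sub_int hx
  have hxδ := Metric.mem_ball_self (x := x) hδ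
  refine hasDerivAt_tsum_of_isPreconnected (t := Metric.ball x δ)
    (g := fun (m : ℤ) (z : ℝ) => 1 / (z - m) ^ k)
    (g' := fun (m : ℤ) (z : ℝ) => -k * (1 / (z - m) ^ (k + 1)))
    (summable_const_div_abs_add_one_pow (by omega : 1 < k + 1) (k / c ^ (k + 1)))
    Metric.isOpen_ball (convex_ball x δ).isPreconnected (fun m y hy => ?_) (fun m y hy => ?_) hxδ
    (summable_one_div_sub_int_pow hx hk) hxδ
  · have hne : y - m ≠ 0 := abs_pos.1 (lt_of_lt_of_le (by positivity) (hbound y hy m))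
    have hderiv := (((hasDerivAt_id y).sub_const (m : ℝ)).fun_pow k).fun_inv (pow_ne_zero k hne)
    simp only [one_div]
    refine hderiv.congr_deriv ?_
    obtain ⟨j, rfl⟩ : ∃ j, k = j + 1 := ⟨k - 1, by omega⟩
    simp only [id_eq, Nat.add_sub_cancel]
    field_simp
    ring
  · have := hbound y hy m
    rw [norm_mul, norm_neg, Real.norm_natCast, norm_div, norm_one, norm_pow, Real.norm_eq_abs,
      mul_one_div, div_div, ← mul_pow]
    gcongr

lemma eventually_sin_pi_mul_ne_zero {x : ℝ} (hx : Real.sin (π * x) ≠ 0) :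
    ∀ᶠ z in nhds x, Real.sin (π * z) ≠ 0 :=
  ContinuousAt.eventually_ne (by fun_prop) hx

lemma hasDerivAt_sin_pi_mul (x : ℝ) :
    HasDerivAt (fun y => Real.sin (π * y)) (π * Real.cos (π * x)) x := by
  simpa [mul_comm] using ((hasDerivAt_id x).const_mul π).sin

lemma hasDerivAt_cos_pi_mul (x : ℝ) :
    HasDerivAt (fun y => Real.cos (π * y)) (-π * Real.sin (π * x)) x := by
  simpa [mul_comm] using ((hasDerivAt_id x).const_mul π).cos

lemma hasSum_one_div_sub_int_pow_succ {k : ℕ} (hk : 1 < k) {S : ℝ → ℝ} {S' x : ℝ}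
    (hS : ∀ z, Real.sin (π * z) ≠ 0 → HasSum (fun m : ℤ => 1 / (z - m) ^ k) (S z))
    (hx : Real.sin (π * x) ≠ 0) (hS' : HasDerivAt S (-k * S') x) :
    HasSum (fun m : ℤ => 1 / (x - m) ^ (k + 1)) S' := by
  have hevent : (fun z : ℝ => ∑' m : ℤ, 1 / (z - m) ^ k) =ᶠ[nhds x] S :=
    (eventually_sin_pi_mul_ne_zero hx).mono fun z hz => (hS z hz).tsum_eq
  have huniq := (hasDerivAt_tsum_one_div_sub_int_pow hx hk).unique
    (hS'.congr_of_eventuallyEq hevent)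
  rw [tsum_mul_left] at huniq
  rw [← mul_left_cancel₀ (neg_ne_zero.2 (by positivity)) huniq]
  exact (summable_one_div_sub_int_pow hx (by omega)).hasSum

lemma hasSum_one_div_sub_int_cube {x : ℝ} (hx : Real.sin (π * x) ≠ 0) :
    HasSum (fun m : ℤ => 1 / (x - m) ^ 3) (π ^ 3 * Real.cos (π * x) / Real.sin (π * x) ^ 3) := by
  refine hasSum_one_div_sub_int_pow_succ one_lt_two (fun _ => hasSum_one_div_sub_int_sq) hx ?_
  have h := (((hasDerivAt_sin_pi_mul x).fun_pow 2).fun_inv (pow_ne_zero 2 hx)).const_mul (π ^ 2)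
  simp only [div_eq_mul_inv]
  refine h.congr_deriv ?_
  simp only [Nat.cast_ofNat, Nat.add_one_sub_one, pow_one]
  field_simp

lemma hasSum_one_div_sub_int_four {x : ℝ} (hx : Real.sin (π * x) ≠ 0) :
    HasSum (fun m : ℤ => 1 / (x - m) ^ 4)
      (π ^ 4 * (1 / Real.sin (π * x) ^ 4 - 2 / 3 / Real.sin (π * x) ^ 2)) := by
  refine hasSum_one_div_sub_int_pow_succ (by norm_num) (fun _ => hasSum_one_div_sub_int_cube) hx ?_
  have h := ((hasDerivAt_cos_pi_mul x).const_mul (π ^ 3)).fun_div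
    ((hasDerivAt_sin_pi_mul x).fun_pow 3) (pow_ne_zero 3 hx)
  refine h.congr_deriv ?_
  have hcos := Real.cos_sq' (π * x)
  simp only [Nat.cast_ofNat, Nat.add_one_sub_one]
  field_simp
  linear_combination -3 * hcos

end

/-! ### Trigonometric polynomials and periodized kernels -/

section

/-- The character `t ↦ e^{2πint}` of `𝕋`, as a function on `ℝ`. -/
def trigExp (n : ℤ) (t : ℝ) : ℂ := exp (2 * π * I * n * t)

lemma trigExp_add_freq (m n : ℤ) (t : ℝ) : trigExp (m + n) t = trigExp m t * trigExp n t := by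
  rw [trigExp, trigExp, trigExp, ← exp_add]
  push_cast
  ring_nf

lemma trigExp_add (n : ℤ) (s t : ℝ) : trigExp n (s + t) = trigExp n s * trigExp n t := by
  rw [trigExp, trigExp, trigExp, ← exp_add]
  push_cast
  ring_nf

/-- The trigonometric polynomials of degree at most `d`, as functions on `ℝ`. -/
def trigPoly (d : ℕ) : Submodule ℂ (ℝ → ℂ) :=
  Submodule.span ℂ (trigExp '' Set.Icc (-d : ℤ) d)

lemma trigExp_mem_trigPoly {n : ℤ} {d : ℕ} (h : |n| ≤ d) : trigExp n ∈ trigPoly d :=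
  Submodule.subset_span ⟨n, abs_le.1 h, rfl⟩

lemma mul_mem_trigPoly {c d : ℕ} {f g : ℝ → ℂ} (hf : f ∈ trigPoly c) (hg : g ∈ trigPoly d) :
    f * g ∈ trigPoly (c + d) := by
  have hfg := Submodule.mul_mem_mul hf hg
  rw [trigPoly, trigPoly, Submodule.span_mul_span] at hfg
  refine Submodule.span_le.2 ?_ hfg
  rintro _ ⟨_, ⟨m, hm, rfl⟩, _, ⟨n, hn, rfl⟩, rfl⟩
  have hmul : trigExp m * trigExp n = trigExp (m + n) :=
    funext fun t => (trigExp_add_freq m n t).symm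
  simp only [hmul]
  exact trigExp_mem_trigPoly ((abs_add_le m n).trans (by
    push_cast; exact add_le_add (abs_le.2 hm) (abs_le.2 hn)))

lemma comp_sub_const_mem_trigPoly {d : ℕ} {f : ℝ → ℂ} (hf : f ∈ trigPoly d) (c : ℝ) :
    (fun t => f (t - c)) ∈ trigPoly d := by
  induction hf using Submodule.span_induction with
  | mem f h =>
    obtain ⟨n, hn, rfl⟩ := h
    have hshift : (fun t => trigExp n (t - c)) = trigExp n (-c) • trigExp n := funext fun t => by
      rw [sub_eq_neg_add, trigExp_add, Pi.smul_apply, smul_eq_mul]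
    exact hshift ▸ Submodule.smul_mem _ _ (Submodule.subset_span ⟨n, hn, rfl⟩)
  | zero => exact Submodule.zero_mem _
  | add f g _ _ hf hg => exact Submodule.add_mem _ hf hg
  | smul a f _ hf => exact Submodule.smul_mem _ a hf

lemma cos_mem_trigPoly {k d : ℕ} (h : k ≤ d) :
    (fun t : ℝ => (Real.cos (2 * k * (π * t)) : ℂ)) ∈ trigPoly d := by
  have hcos : (fun t : ℝ => (Real.cos (2 * k * (π * t)) : ℂ)) =
      (1 / 2 : ℂ) • (trigExp k + trigExp (-k)) := funext fun t => by
    simp only [ofReal_cos, Complex.cos, Pi.smul_apply, Pi.add_apply, trigExp, smul_eq_mul]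
    push_cast
    ring_nf
  rw [hcos]
  refine Submodule.smul_mem _ _ (Submodule.add_mem _ ?_ ?_) <;>
    exact trigExp_mem_trigPoly (by simpa using h)

lemma sin_mem_trigPoly {k d : ℕ} (h : k ≤ d) :
    (fun t : ℝ => (Real.sin (2 * k * (π * t)) : ℂ)) ∈ trigPoly d := by
  have hsin : (fun t : ℝ => (Real.sin (2 * k * (π * t)) : ℂ)) =
      (I / 2 : ℂ) • (trigExp (-k) - trigExp k) := funext fun t => by
    simp only [ofReal_sin, Complex.sin, Pi.smul_apply, Pi.sub_apply, trigExp, smul_eq_mul]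
    push_cast
    ring_nf
  rw [hsin]
  refine Submodule.smul_mem _ _ (Submodule.sub_mem _ ?_ ?_) <;>
    exact trigExp_mem_trigPoly (by simpa using h)

/-- The Dirichlet kernel `∑_{|j| ≤ k} e^{2ijθ}`. -/
def dirichletSum (k : ℕ) (θ : ℝ) : ℝ :=
  1 + 2 * ∑ j ∈ Finset.range k, Real.cos (2 * (j + 1 : ℕ) * θ)

/-- The Fejér kernel, as the sum of the first `N` Dirichlet kernels. -/
def fejerSum (N : ℕ) (θ : ℝ) : ℝ := ∑ k ∈ Finset.range N, dirichletSum k θ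

/-- The conjugate Fejér-type sum `sin (Nθ)² cot θ`, expanded as a trigonometric polynomial. -/
def conjFejerSum (N : ℕ) (θ : ℝ) : ℝ :=
  1 / 2 * ∑ k ∈ Finset.range N, (Real.sin (2 * k * θ) + Real.sin (2 * (k + 1 : ℕ) * θ))

lemma dirichletSum_mul_sin (k : ℕ) (θ : ℝ) :
    dirichletSum k θ * Real.sin θ = Real.sin ((2 * k + 1) * θ) := by
  induction k with
  | zero => simp [dirichletSum]
  | succ k ih =>
    rw [dirichletSum, Finset.sum_range_succ, mul_add, ← add_assoc, ← dirichletSum, add_mul, ih]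
    have hsum := Real.sin_add (2 * (k + 1 : ℕ) * θ) θ
    have hdiff := Real.sin_sub (2 * (k + 1 : ℕ) * θ) θ
    push_cast at *
    ring_nf at *
    linarith

lemma sum_sin_odd_mul_sin (N : ℕ) (θ : ℝ) :
    (∑ k ∈ Finset.range N, Real.sin ((2 * k + 1) * θ)) * Real.sin θ = Real.sin (N * θ) ^ 2 := by
  induction N with
  | zero => simp
  | succ N ih =>
    rw [Finset.sum_range_succ, add_mul, ih, Real.sin_sq, Real.sin_sq, Real.cos_sq, Real.cos_sq]
    have hsum := Real.cos_add ((2 * N + 1) * θ) θ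
    have hdiff := Real.cos_sub ((2 * N + 1) * θ) θ
    push_cast
    ring_nf at *
    linarith

lemma fejerSum_mul_sin_sq (N : ℕ) (θ : ℝ) :
    fejerSum N θ * Real.sin θ ^ 2 = Real.sin (N * θ) ^ 2 := by
  simp_rw [fejerSum, sq (Real.sin θ), ← mul_assoc, Finset.sum_mul, dirichletSum_mul_sin,
    ← Finset.sum_mul, sum_sin_odd_mul_sin]

lemma conjFejerSum_mul_sin (N : ℕ) (θ : ℝ) :
    conjFejerSum N θ * Real.sin θ = Real.sin (N * θ) ^ 2 * Real.cos θ := by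
  have hfactor (k : ℕ) : Real.sin (2 * k * θ) + Real.sin (2 * (k + 1 : ℕ) * θ) =
      2 * Real.cos θ * Real.sin ((2 * k + 1) * θ) := by
    have hsum := Real.sin_add ((2 * k + 1) * θ) θ
    have hdiff := Real.sin_sub ((2 * k + 1) * θ) θ
    push_cast
    ring_nf at *
    linarith
  rw [← sum_sin_odd_mul_sin, conjFejerSum]
  simp_rw [hfactor, ← Finset.mul_sum]
  ring

lemma fejerSum_pi_mul_int (N : ℕ) (n : ℤ) : fejerSum N (π * n) = N ^ 2 := by
  have hcos (j : ℕ) : Real.cos (2 * (j + 1 : ℕ) * (π * n)) = 1 := by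
    rw [Real.cos_eq_one_iff]
    exact ⟨(j + 1 : ℕ) * n, by push_cast; ring⟩
  simp only [fejerSum, dirichletSum, hcos, Finset.sum_const, Finset.card_range, nsmul_eq_mul]
  induction N with
  | zero => simp
  | succ N ih =>
    rw [Finset.sum_range_succ, ih]
    push_cast
    ring

lemma conjFejerSum_pi_mul_int (N : ℕ) (n : ℤ) : conjFejerSum N (π * n) = 0 := by
  have hsin (k : ℕ) : Real.sin (2 * k * (π * n)) = 0 :=
    Real.sin_eq_zero_iff.2 ⟨2 * k * n, by push_cast; ring⟩
  simp [conjFejerSum, hsin, -Nat.cast_add]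

lemma fejerSum_mem_trigPoly (N : ℕ) : (fun t : ℝ => (fejerSum N (π * t) : ℂ)) ∈ trigPoly N := by
  have hone : (fun _ => 1 : ℝ → ℂ) ∈ trigPoly N := by
    simpa using cos_mem_trigPoly (Nat.zero_le N)
  have hexpand : (fun t : ℝ => (fejerSum N (π * t) : ℂ)) =
      ∑ k ∈ Finset.range N, ((fun _ => 1) + (2 : ℂ) • ∑ j ∈ Finset.range k,
        fun t : ℝ => (Real.cos (2 * (j + 1 : ℕ) * (π * t)) : ℂ)) := by
    ext t
    simp only [fejerSum, dirichletSum, ofReal_sum, ofReal_add, ofReal_one, ofReal_mul, ofReal_ofNat,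
      Finset.sum_apply, Pi.add_apply, Pi.smul_apply, smul_eq_mul]
  rw [hexpand]
  refine Submodule.sum_mem _ fun k hk => Submodule.add_mem _ hone (Submodule.smul_mem _ _ ?_)
  refine Submodule.sum_mem _ fun j hj => cos_mem_trigPoly ?_
  rw [Finset.mem_range] at hj hk
  omega

lemma conjFejerSum_mem_trigPoly (N : ℕ) :
    (fun t : ℝ => (conjFejerSum N (π * t) : ℂ)) ∈ trigPoly N := by
  have hexpand : (fun t : ℝ => (conjFejerSum N (π * t) : ℂ)) =
      (1 / 2 : ℂ) • ∑ k ∈ Finset.range N, ((fun t : ℝ => (Real.sin (2 * k * (π * t)) : ℂ)) +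
        fun t : ℝ => (Real.sin (2 * (k + 1 : ℕ) * (π * t)) : ℂ)) := by
    ext t
    simp only [conjFejerSum, ofReal_sum, ofReal_add, ofReal_one, ofReal_mul, ofReal_ofNat,
      ofReal_div, Finset.sum_apply, Pi.add_apply, Pi.smul_apply, smul_eq_mul]
  rw [hexpand]
  refine Submodule.smul_mem _ _ (Submodule.sum_mem _ fun k hk => ?_)
  rw [Finset.mem_range] at hk
  exact Submodule.add_mem _ (sin_mem_trigPoly hk.le) (sin_mem_trigPoly hk)

lemma sin_sq_mem_trigPoly (N : ℕ) :
    (fun t : ℝ => ((Real.sin (N * (π * t)) ^ 2 : ℝ) : ℂ)) ∈ trigPoly N := by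
  have hexpand : (fun t : ℝ => ((Real.sin (N * (π * t)) ^ 2 : ℝ) : ℂ)) =
      (1 / 2 : ℂ) • ((fun t : ℝ => (Real.cos (2 * (0 : ℕ) * (π * t)) : ℂ)) -
        fun t : ℝ => (Real.cos (2 * N * (π * t)) : ℂ)) := by
    ext t
    simp only [Real.sin_sq_eq_half_sub, Pi.smul_apply, Pi.sub_apply, smul_eq_mul,
      CharP.cast_eq_zero, mul_zero, zero_mul, Real.cos_zero]
    push_cast
    ring_nf
  rw [hexpand]
  exact Submodule.smul_mem _ _ (Submodule.sub_mem _ (cos_mem_trigPoly (Nat.zero_le N))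
    (cos_mem_trigPoly le_rfl))

/-- The kernel interpolating values: the integrable square of the Fejér kernel of the line. -/
def valueKernel (y : ℝ) : ℝ := Real.sinc y ^ 4

/-- The kernel interpolating slopes: it vanishes at `0` with derivative `1`. -/
def slopeKernel (y : ℝ) : ℝ := y * Real.sinc y ^ 4

/-- The periodization of `valueKernel`, see `hasSum_valueKernel`. -/
def valueSum (N : ℕ) (t : ℝ) : ℝ :=
  (fejerSum N (π * t) ^ 2 - 2 / 3 * (Real.sin (N * (π * t)) ^ 2 * fejerSum N (π * t))) / N ^ 4

/-- The periodization of `slopeKernel`, see `hasSum_slopeKernel`. -/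
def slopeSum (N : ℕ) (t : ℝ) : ℝ := fejerSum N (π * t) * conjFejerSum N (π * t) / N ^ 3

lemma valueSum_mem_trigPoly (N : ℕ) : (fun t => (valueSum N t : ℂ)) ∈ trigPoly (2 * N) := by
  have hF := fejerSum_mem_trigPoly N
  have hexpand : (fun t => (valueSum N t : ℂ)) = (1 / N ^ 4 : ℂ) •
      ((fun t => (fejerSum N (π * t) : ℂ)) * (fun t => (fejerSum N (π * t) : ℂ)) - (2 / 3 : ℂ) •
        ((fun t : ℝ => ((Real.sin (N * (π * t)) ^ 2 : ℝ) : ℂ)) *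
          (fun t => (fejerSum N (π * t) : ℂ)))) := by
    ext t
    simp only [valueSum, Pi.smul_apply, Pi.sub_apply, Pi.mul_apply, smul_eq_mul]
    push_cast
    ring
  rw [hexpand, two_mul]
  exact Submodule.smul_mem _ _ (Submodule.sub_mem _ (mul_mem_trigPoly hF hF)
    (Submodule.smul_mem _ _ (mul_mem_trigPoly (sin_sq_mem_trigPoly N) hF)))

lemma slopeSum_mem_trigPoly (N : ℕ) : (fun t => (slopeSum N t : ℂ)) ∈ trigPoly (2 * N) := by
  have hexpand : (fun t => (slopeSum N t : ℂ)) = (1 / N ^ 3 : ℂ) •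
      ((fun t => (fejerSum N (π * t) : ℂ)) * (fun t => (conjFejerSum N (π * t) : ℂ))) := by
    ext t
    simp only [slopeSum, Pi.smul_apply, Pi.mul_apply, smul_eq_mul]
    push_cast
    ring
  rw [hexpand, two_mul]
  exact Submodule.smul_mem _ _ (mul_mem_trigPoly (fejerSum_mem_trigPoly N)
    (conjFejerSum_mem_trigPoly N))

variable {N : ℕ}

lemma sin_pi_mul_sub_int_pow_four (t : ℝ) (m : ℤ) :
    Real.sin (π * N * (t - m)) ^ 4 = Real.sin (N * (π * t)) ^ 4 := by
  have harg : π * N * (t - m) = N * (π * t) - (N * m : ℤ) * π := by push_cast; ring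
  rw [harg, Real.sin_sub_int_mul_pi, mul_pow, ← zpow_natCast, ← zpow_mul,
    Even.neg_one_zpow (Even.mul_left (by decide) _), one_mul]

lemma sinc_pi_mul_int_sub_int (hN : N ≠ 0) {n m : ℤ} (h : m ≠ n) :
    Real.sinc (π * N * (n - m)) = 0 := by
  have hsub : (n - m : ℝ) ≠ 0 := sub_ne_zero.2 (by exact_mod_cast h.symm)
  rw [Real.sinc_of_ne_zero (by positivity), div_eq_zero_iff, Real.sin_eq_zero_iff]
  exact .inl ⟨N * (n - m), by push_cast; ring⟩

lemma exists_intCast_eq_of_sin_pi_mul_eq_zero {t : ℝ} (ht : Real.sin (π * t) = 0) :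
    ∃ n : ℤ, (n : ℝ) = t := by
  obtain ⟨n, hn⟩ := Real.sin_eq_zero_iff.1 ht
  exact ⟨n, mul_left_cancel₀ Real.pi_ne_zero ((mul_comm _ _).trans hn)⟩

lemma hasSum_valueKernel (hN : N ≠ 0) (t : ℝ) :
    HasSum (fun m : ℤ => valueKernel (π * N * (t - m))) (valueSum N t) := by
  by_cases ht : Real.sin (π * t) = 0
  · obtain ⟨n, rfl⟩ := exists_intCast_eq_of_sin_pi_mul_eq_zero ht
    have hvalue : valueSum N n = valueKernel (π * N * (n - n)) := by
      have hsin : Real.sin (N * (π * n)) = 0 :=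
        Real.sin_eq_zero_iff.2 ⟨N * n, by push_cast; ring⟩
      rw [valueSum, valueKernel, fejerSum_pi_mul_int, hsin, sub_self, mul_zero, Real.sinc_zero]
      field_simp
      simp
    rw [hvalue]
    exact hasSum_single n fun m hm => by
      rw [valueKernel, sinc_pi_mul_int_sub_int hN hm, zero_pow four_ne_zero]
  · have hterm (m : ℤ) : valueKernel (π * N * (t - m)) =
        Real.sin (N * (π * t)) ^ 4 / (π * N) ^ 4 * (1 / (t - m) ^ 4) := by
      have htm := sub_intCast_ne_zero_of_sin_ne_zero ht m
      rw [valueKernel, Real.sinc_of_ne_zero (by positivity), div_pow, sin_pi_mul_sub_int_pow_four]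
      field_simp
    have hvalue : valueSum N t = Real.sin (N * (π * t)) ^ 4 / (π * N) ^ 4 *
        (π ^ 4 * (1 / Real.sin (π * t) ^ 4 - 2 / 3 / Real.sin (π * t) ^ 2)) := by
      rw [valueSum, eq_div_of_mul_eq (pow_ne_zero 2 ht) (fejerSum_mul_sin_sq N (π * t))]
      field_simp
    simp only [hterm, hvalue]
    exact (hasSum_one_div_sub_int_four ht).mul_left _

lemma hasSum_slopeKernel (hN : N ≠ 0) (t : ℝ) :
    HasSum (fun m : ℤ => slopeKernel (π * N * (t - m))) (slopeSum N t) := by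
  by_cases ht : Real.sin (π * t) = 0
  · obtain ⟨n, rfl⟩ := exists_intCast_eq_of_sin_pi_mul_eq_zero ht
    have hterm (m : ℤ) : slopeKernel (π * N * (n - m)) = 0 := by
      rcases eq_or_ne m n with rfl | hm
      · simp [slopeKernel]
      · rw [slopeKernel, sinc_pi_mul_int_sub_int hN hm, zero_pow four_ne_zero, mul_zero]
    simp only [hterm, slopeSum, conjFejerSum_pi_mul_int, mul_zero, zero_div]
    exact hasSum_zero
  · have hterm (m : ℤ) : slopeKernel (π * N * (t - m)) =
        Real.sin (N * (π * t)) ^ 4 / (π * N) ^ 3 * (1 / (t - m) ^ 3) := by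
      have htm := sub_intCast_ne_zero_of_sin_ne_zero ht m
      rw [slopeKernel, Real.sinc_of_ne_zero (by positivity), div_pow, sin_pi_mul_sub_int_pow_four]
      field_simp
    have hvalue : slopeSum N t = Real.sin (N * (π * t)) ^ 4 / (π * N) ^ 3 *
        (π ^ 3 * Real.cos (π * t) / Real.sin (π * t) ^ 3) := by
      rw [slopeSum, eq_div_of_mul_eq (pow_ne_zero 2 ht) (fejerSum_mul_sin_sq N (π * t)),
        eq_div_of_mul_eq ht (conjFejerSum_mul_sin N (π * t))]
      field_simp
    simp only [hterm, hvalue]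
    exact (hasSum_one_div_sub_int_cube ht).mul_left _

end

/-! ### Kernel estimates -/

section

/-- The derivative of `valueKernel`; Lean's division by zero gives the correct value at `0`. -/
def valueKernel' (y : ℝ) : ℝ :=
  4 * Real.sin y ^ 3 * Real.cos y / y ^ 4 - 4 * Real.sin y ^ 4 / y ^ 5

/-- The derivative of `slopeKernel`. -/
def slopeKernel' (y : ℝ) : ℝ := valueKernel y + y * valueKernel' y

/-- The second derivative of `valueKernel` away from `0`. -/
def valueKernel'' (y : ℝ) : ℝ :=
  (12 * Real.sin y ^ 2 * Real.cos y ^ 2 - 4 * Real.sin y ^ 4) / y ^ 4 -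
    8 * (4 * Real.sin y ^ 3 * Real.cos y) / y ^ 5 + 20 * Real.sin y ^ 4 / y ^ 6

/-- The second derivative of `slopeKernel` away from `0`. -/
def slopeKernel'' (y : ℝ) : ℝ := 2 * valueKernel' y + y * valueKernel'' y

lemma valueKernel_zero : valueKernel 0 = 1 := by simp [valueKernel]

lemma slopeKernel_zero : slopeKernel 0 = 0 := by simp [slopeKernel]

lemma valueKernel'_zero : valueKernel' 0 = 0 := by simp [valueKernel']

lemma slopeKernel'_zero : slopeKernel' 0 = 1 := by simp [slopeKernel', valueKernel_zero]

variable {y : ℝ}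

lemma valueKernel_of_ne_zero (hy : y ≠ 0) : valueKernel y = Real.sin y ^ 4 / y ^ 4 := by
  rw [valueKernel, Real.sinc_of_ne_zero hy, div_pow]

lemma slopeKernel_of_ne_zero (hy : y ≠ 0) : slopeKernel y = Real.sin y ^ 4 / y ^ 3 := by
  rw [slopeKernel, Real.sinc_of_ne_zero hy, div_pow]
  field_simp

lemma slopeKernel'_of_ne_zero (hy : y ≠ 0) : slopeKernel' y =
    4 * Real.sin y ^ 3 * Real.cos y / y ^ 3 - 3 * Real.sin y ^ 4 / y ^ 4 := by
  rw [slopeKernel', valueKernel', valueKernel_of_ne_zero hy]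
  field_simp
  ring

lemma slopeKernel''_of_ne_zero (hy : y ≠ 0) : slopeKernel'' y =
    (12 * Real.sin y ^ 2 * Real.cos y ^ 2 - 4 * Real.sin y ^ 4) / y ^ 3 -
      6 * (4 * Real.sin y ^ 3 * Real.cos y) / y ^ 4 + 12 * Real.sin y ^ 4 / y ^ 5 := by
  rw [slopeKernel'', valueKernel', valueKernel'']
  field_simp
  ring

lemma hasDerivAt_valueKernel (hy : y ≠ 0) : HasDerivAt valueKernel (valueKernel' y) y := by
  have hquot := ((Real.hasDerivAt_sin y).fun_pow 4).fun_div ((hasDerivAt_id y).fun_pow 4)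
    (pow_ne_zero 4 hy)
  refine (hquot.congr_deriv ?_).congr_of_eventuallyEq
    ((eventually_ne_nhds hy).mono fun z hz => valueKernel_of_ne_zero hz)
  simp only [id, valueKernel', Nat.cast_ofNat, Nat.add_one_sub_one]
  field_simp

lemma hasDerivAt_slopeKernel (hy : y ≠ 0) : HasDerivAt slopeKernel (slopeKernel' y) y := by
  have hprod := (hasDerivAt_id y).mul (hasDerivAt_valueKernel hy)
  exact hprod.congr_deriv (by rw [id, one_mul, slopeKernel'])

lemma hasDerivAt_valueKernel' (hy : y ≠ 0) : HasDerivAt valueKernel' (valueKernel'' y) y := by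
  have hfst := ((((Real.hasDerivAt_sin y).fun_pow 3).const_mul 4).fun_mul
    (Real.hasDerivAt_cos y)).fun_div ((hasDerivAt_id y).fun_pow 4) (pow_ne_zero 4 hy)
  have hsnd := (((Real.hasDerivAt_sin y).fun_pow 4).const_mul 4).fun_div
    ((hasDerivAt_id y).fun_pow 5) (pow_ne_zero 5 hy)
  refine (hfst.fun_sub hsnd).congr_deriv ?_
  simp only [id, valueKernel'', Nat.cast_ofNat, Nat.add_one_sub_one]
  field_simp
  ring

lemma hasDerivAt_slopeKernel' (hy : y ≠ 0) : HasDerivAt slopeKernel' (slopeKernel'' y) y := by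
  have hsum := (hasDerivAt_valueKernel hy).add
    ((hasDerivAt_id y).mul (hasDerivAt_valueKernel' hy))
  exact hsum.congr_deriv (by rw [id, one_mul, slopeKernel'']; ring)

lemma abs_sin_pow_four_le (y : ℝ) : |Real.sin y ^ 4| ≤ 1 := by
  rw [abs_pow]
  exact pow_le_one₀ (abs_nonneg _) (Real.abs_sin_le_one y)

lemma abs_four_mul_sin_cube_mul_cos_le (y : ℝ) : |4 * Real.sin y ^ 3 * Real.cos y| ≤ 1.3 := by
  have hsq : (4 * Real.sin y ^ 3 * Real.cos y) ^ 2 =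
      16 * (Real.sin y ^ 2) ^ 3 * (1 - Real.sin y ^ 2) := by
    rw [mul_pow, Real.cos_sq']
    ring
  refine abs_le_of_sq_le_sq ?_ (by norm_num)
  rw [hsq]
  generalize Real.sin y ^ 2 = u
  nlinarith [mul_nonneg (sq_nonneg (u - 3 / 4)) (show 0 ≤ u ^ 2 + u / 2 + 3 / 16 by
    nlinarith [sq_nonneg (u + 1 / 4)])]

lemma abs_twelve_mul_sin_sq_mul_cos_sq_sub_le (y : ℝ) :
    |12 * Real.sin y ^ 2 * Real.cos y ^ 2 - 4 * Real.sin y ^ 4| ≤ 4 := by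
  have hle := Real.sin_sq_le_one y
  have hnonneg := sq_nonneg (Real.sin y)
  rw [Real.cos_sq', show Real.sin y ^ 4 = (Real.sin y ^ 2) ^ 2 by ring]
  generalize Real.sin y ^ 2 = u at *
  rw [abs_le]
  constructor <;> nlinarith [mul_nonneg hnonneg (sub_nonneg.2 hle), sq_nonneg (u - 3 / 8)]

lemma abs_mul_div_pow_add_le {a c B ρ : ℝ} (ha : 0 ≤ a) (hc : |c| ≤ B) (hρ : 0 < ρ) (hy : ρ ≤ |y|)
    (k j : ℕ) : |a * c / y ^ (k + j)| ≤ a * B / ρ ^ j / |y| ^ k := by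
  have hy₀ : 0 < |y| := hρ.trans_le hy
  have hB : 0 ≤ B := (abs_nonneg c).trans hc
  rw [abs_div, abs_mul, abs_of_nonneg ha, abs_pow, div_div, add_comm k j, pow_add]
  gcongr

lemma abs_valueKernel_le (hy : y ≠ 0) : |valueKernel y| ≤ 1 / |y| ^ 4 := by
  rw [valueKernel_of_ne_zero hy, abs_div, abs_pow y]
  gcongr
  exact abs_sin_pow_four_le y

lemma abs_slopeKernel_le (hy : y ≠ 0) : |slopeKernel y| ≤ 1 / |y| ^ 3 := by
  rw [slopeKernel_of_ne_zero hy, abs_div, abs_pow y]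
  gcongr
  exact abs_sin_pow_four_le y

lemma abs_valueKernel'_le (hy : 3.1 ≤ |y|) : |valueKernel' y| ≤ 2.6 / |y| ^ 4 := by
  have hρ : (0 : ℝ) < 3.1 := by norm_num
  have hcos := abs_mul_div_pow_add_le zero_le_one (abs_four_mul_sin_cube_mul_cos_le y) hρ hy 4 0
  have hsin := abs_mul_div_pow_add_le zero_le_four (abs_sin_pow_four_le y) hρ hy 4 1
  rw [one_mul] at hcos
  calc |valueKernel' y| ≤ _ := abs_sub _ _
    _ ≤ 1 * 1.3 / 3.1 ^ 0 / |y| ^ 4 + 4 * 1 / 3.1 ^ 1 / |y| ^ 4 := add_le_add hcos hsin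
    _ ≤ 2.6 / |y| ^ 4 := by rw [← add_div]; gcongr; norm_num

lemma abs_slopeKernel'_le (hy : 3.1 ≤ |y|) : |slopeKernel' y| ≤ 2.27 / |y| ^ 3 := by
  have hρ : (0 : ℝ) < 3.1 := by norm_num
  have hcos := abs_mul_div_pow_add_le zero_le_one (abs_four_mul_sin_cube_mul_cos_le y) hρ hy 3 0
  have hsin := abs_mul_div_pow_add_le zero_le_three (abs_sin_pow_four_le y) hρ hy 3 1
  rw [one_mul] at hcos
  rw [slopeKernel'_of_ne_zero (abs_pos.1 (hρ.trans_le hy))]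
  calc _ ≤ _ := abs_sub _ _
    _ ≤ 1 * 1.3 / 3.1 ^ 0 / |y| ^ 3 + 3 * 1 / 3.1 ^ 1 / |y| ^ 3 := add_le_add hcos hsin
    _ ≤ 2.27 / |y| ^ 3 := by rw [← add_div]; gcongr; norm_num

lemma abs_valueKernel''_le (hy : 2.45 ≤ |y|) : |valueKernel'' y| ≤ 11.6 / |y| ^ 4 := by
  have hρ : (0 : ℝ) < 2.45 := by norm_num
  have hfst := abs_mul_div_pow_add_le zero_le_one
    (abs_twelve_mul_sin_sq_mul_cos_sq_sub_le y) hρ hy 4 0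
  have hcos := abs_mul_div_pow_add_le (a := 8) (by norm_num)
    (abs_four_mul_sin_cube_mul_cos_le y) hρ hy 4 1
  have hsin := abs_mul_div_pow_add_le (a := 20) (by norm_num) (abs_sin_pow_four_le y) hρ hy 4 2
  rw [one_mul] at hfst
  calc |valueKernel'' y| ≤ _ := (abs_add_le _ _).trans (add_le_add_left (abs_sub _ _) _)
    _ ≤ 1 * 4 / 2.45 ^ 0 / |y| ^ 4 + 8 * 1.3 / 2.45 ^ 1 / |y| ^ 4 + 20 * 1 / 2.45 ^ 2 / |y| ^ 4 :=
      add_le_add (add_le_add hfst hcos) hsin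
    _ ≤ 11.6 / |y| ^ 4 := by rw [← add_div, ← add_div]; gcongr; norm_num

lemma abs_slopeKernel''_le (hy : 2.45 ≤ |y|) : |slopeKernel'' y| ≤ 9.2 / |y| ^ 3 := by
  have hρ : (0 : ℝ) < 2.45 := by norm_num
  have hfst := abs_mul_div_pow_add_le zero_le_one
    (abs_twelve_mul_sin_sq_mul_cos_sq_sub_le y) hρ hy 3 0
  have hcos := abs_mul_div_pow_add_le (a := 6) (by norm_num)
    (abs_four_mul_sin_cube_mul_cos_le y) hρ hy 3 1
  have hsin := abs_mul_div_pow_add_le (a := 12) (by norm_num) (abs_sin_pow_four_le y) hρ hy 3 2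
  rw [one_mul] at hfst
  rw [slopeKernel''_of_ne_zero (abs_pos.1 (hρ.trans_le hy))]
  calc _ ≤ _ := (abs_add_le _ _).trans (add_le_add_left (abs_sub _ _) _)
    _ ≤ 1 * 4 / 2.45 ^ 0 / |y| ^ 3 + 6 * 1.3 / 2.45 ^ 1 / |y| ^ 3 + 12 * 1 / 2.45 ^ 2 / |y| ^ 3 :=
      add_le_add (add_le_add hfst hcos) hsin
    _ ≤ 9.2 / |y| ^ 3 := by rw [← add_div, ← add_div]; gcongr; norm_num

lemma sinc_abs (x : ℝ) : Real.sinc |x| = Real.sinc x := by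
  rcases abs_choice x with h | h <;> rw [h]
  exact Real.sinc_neg x

lemma one_sub_sq_div_six_le_sinc (x : ℝ) : 1 - x ^ 2 / 6 ≤ Real.sinc x := by
  rcases eq_or_ne x 0 with rfl | hx
  · simp
  have hpos : 0 < |x| := abs_pos.2 hx
  rw [← sinc_abs, Real.sinc_of_ne_zero hpos.ne', le_div_iff₀ hpos, ← sq_abs]
  linarith [Real.sin_ge_sub_cube hpos.le]

lemma sinc_le {x : ℝ} (hx : |x| ≤ 2) : Real.sinc x ≤ 1 - x ^ 2 / 6 + x ^ 4 / 100 := by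
  rcases eq_or_ne x 0 with rfl | hx₀
  · simp
  have hpos : 0 < |x| := abs_pos.2 hx₀
  rw [← sinc_abs, Real.sinc_of_ne_zero hpos.ne', div_le_iff₀ hpos, ← sq_abs,
    ← Even.pow_abs (by decide : Even 4)]
  obtain ⟨u, hu⟩ : ∃ u, |x| = 2 * u := ⟨|x| / 2, by ring⟩
  rw [hu] at hx hpos ⊢
  have hu₀ : 0 < u := by linarith
  have hu₁ : |u| ≤ 1 := by rw [abs_of_pos hu₀]; linarith
  have hsin := (abs_le.1 (Real.sin_bound hu₁)).2
  have hcos := (abs_le.1 (Real.cos_bound hu₁)).2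
  rw [abs_of_pos hu₀] at hsin hcos hu₁
  have hv : u ^ 2 ≤ 1 := pow_le_one₀ hu₀.le hu₁
  have hcos₀ : 0 ≤ Real.cos u := by linarith [Real.one_sub_sq_div_two_le_cos (x := u)]
  calc Real.sin (2 * u) = 2 * (Real.sin u * Real.cos u) := by rw [Real.sin_two_mul, mul_assoc]
    _ ≤ 2 * ((u - u ^ 3 / 6 + u ^ 5 / 100) * (1 - u ^ 2 / 2 + u ^ 4 * (5 / 96))) := by
      gcongr
      · nlinarith [mul_nonneg hu₀.le (sub_nonneg.2 hv), pow_pos hu₀ 5]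
      · linarith
      · linarith
    _ ≤ (1 - (2 * u) ^ 2 / 6 + (2 * u) ^ 4 / 100) * (2 * u) := by
      have hfactor : 0 ≤ u ^ 5 * (7 / 240 + u ^ 2 * (197 / 7200 - u ^ 2 / 960)) := by
        have : 0 ≤ 197 / 7200 - u ^ 2 / 960 := by linarith
        positivity
      linear_combination hfactor

lemma sinc_nonneg {x : ℝ} (hx : |x| ≤ 2) : 0 ≤ Real.sinc x := by
  have hsq : x ^ 2 ≤ 2 ^ 2 := sq_le_sq' (abs_le.1 hx).1 (abs_le.1 hx).2
  linarith [one_sub_sq_div_six_le_sinc x]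

lemma valueKernel_nonneg (x : ℝ) : 0 ≤ valueKernel x := Even.pow_nonneg (by decide) _

lemma valueKernel_le_one (x : ℝ) : valueKernel x ≤ 1 :=
  (Even.pow_abs (by decide : Even 4) _).ge.trans
    (pow_le_one₀ (abs_nonneg _) (abs_le.2 ⟨Real.neg_one_le_sinc x, Real.sinc_le_one x⟩))

lemma one_sub_two_thirds_mul_sq_le_valueKernel (x : ℝ) : 1 - 2 / 3 * x ^ 2 ≤ valueKernel x := by
  have hbernoulli := one_add_mul_le_pow (a := Real.sinc x - 1)
    (by linarith [Real.neg_one_le_sinc x]) 4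
  rw [add_sub_cancel] at hbernoulli
  rw [valueKernel]
  push_cast at hbernoulli
  linarith [one_sub_sq_div_six_le_sinc x]

lemma abs_valueKernel_sub_one_le (x : ℝ) : |valueKernel x - 1| ≤ 2 / 3 * x ^ 2 := by
  rw [abs_sub_comm, abs_of_nonneg (sub_nonneg.2 (valueKernel_le_one x))]
  linarith [one_sub_two_thirds_mul_sq_le_valueKernel x]

lemma valueKernel_le_one_sub_mul_sq {x : ℝ} (hx : |x| ≤ 0.65) :
    valueKernel x ≤ 1 - 0.585 * x ^ 2 := by
  have hv : x ^ 2 ≤ 0.4225 := by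
    rw [← sq_abs]
    nlinarith [abs_nonneg x]
  have hsinc := sinc_le (hx.trans (by norm_num : (0.65 : ℝ) ≤ 2))
  have hnonneg := sinc_nonneg (hx.trans (by norm_num : (0.65 : ℝ) ≤ 2))
  have hlin : Real.sinc x ≤ 1 - 0.16244 * x ^ 2 := by nlinarith [sq_nonneg x]
  have hsq : Real.sinc x ^ 2 ≤ 1 - 0.3137 * x ^ 2 := by nlinarith [sq_nonneg x]
  rw [valueKernel]
  nlinarith [sq_nonneg x, sq_nonneg (Real.sinc x)]

lemma abs_slopeKernel_sub_self_le {x : ℝ} (hx : |x| ≤ 0.65) :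
    |slopeKernel x - x| ≤ 0.4334 * x ^ 2 := by
  have hle : |valueKernel x - 1| ≤ 2 / 3 * |x| ^ 2 := by
    rw [sq_abs]
    exact abs_valueKernel_sub_one_le x
  calc |slopeKernel x - x| = |x| * |valueKernel x - 1| := by
        rw [← abs_mul, mul_sub, mul_one, slopeKernel, valueKernel]
    _ ≤ 0.65 * (2 / 3 * |x| ^ 2) := by gcongr
    _ ≤ 0.4334 * x ^ 2 := by rw [sq_abs]; linarith [sq_nonneg x]

lemma abs_slopeKernel_le_sinc_cube (x : ℝ) : |slopeKernel x| ≤ |Real.sinc x| ^ 3 := by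
  have hsin : |x * Real.sinc x| ≤ 1 := by
    rcases eq_or_ne x 0 with rfl | hx
    · simp
    · rw [Real.sinc_of_ne_zero hx, mul_div_cancel₀ _ hx]
      exact Real.abs_sin_le_one x
  calc |slopeKernel x| = |x * Real.sinc x| * |Real.sinc x| ^ 3 := by
        rw [slopeKernel, ← abs_pow, ← abs_mul]
        ring_nf
    _ ≤ |Real.sinc x| ^ 3 := mul_le_of_le_one_left (by positivity) hsin

lemma sinc_le_of_le_abs {r x : ℝ} (hr : 0 ≤ r) (hrx : r ≤ |x|) (hx : |x| ≤ 2) :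
    Real.sinc x ≤ 1 - r ^ 2 / 6 + r ^ 4 / 100 := by
  have hle : r ^ 2 ≤ x ^ 2 := sq_abs x ▸ pow_le_pow_left₀ hr hrx 2
  have hsq : x ^ 2 ≤ 2 ^ 2 := sq_le_sq' (abs_le.1 hx).1 (abs_le.1 hx).2
  have hmono : 0 ≤ (x ^ 2 - r ^ 2) * (1 / 6 - (x ^ 2 + r ^ 2) / 100) :=
    mul_nonneg (sub_nonneg.2 hle) (by linarith)
  linarith [sinc_le hx]

lemma abs_kernels_le_of_sinc_le {x b : ℝ} (hx : |x| ≤ 2) (hb : Real.sinc x ≤ b) :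
    |valueKernel x| ≤ b ^ 4 ∧ |slopeKernel x| ≤ b ^ 3 := by
  have hnonneg := sinc_nonneg hx
  rw [abs_of_nonneg (valueKernel_nonneg x)]
  refine ⟨pow_le_pow_left₀ hnonneg hb 4, (abs_slopeKernel_le_sinc_cube x).trans ?_⟩
  rw [abs_of_nonneg hnonneg]
  exact pow_le_pow_left₀ hnonneg hb 3

lemma abs_sub_sub_mul_le {g g' g'' : ℝ → ℝ} {a d B : ℝ}
    (hg : ∀ s ∈ Set.Icc (0 : ℝ) 1, HasDerivAt g (g' (a + s * d)) (a + s * d))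
    (hg' : ∀ s ∈ Set.Icc (0 : ℝ) 1, HasDerivAt g' (g'' (a + s * d)) (a + s * d))
    (hB : ∀ s ∈ Set.Icc (0 : ℝ) 1, |g'' (a + s * d)| ≤ B) :
    |g (a + d) - g a - g' a * d| ≤ B * d ^ 2 / 2 := by
  have hline (s : ℝ) : HasDerivAt (fun s => a + s * d) d s := by
    simpa using ((hasDerivAt_id s).mul_const d).const_add a
  have hfst (s : ℝ) (hs : s ∈ Set.Icc (0 : ℝ) 1) :
      HasDerivAt (fun s => g (a + s * d) - g' a * (s * d)) ((g' (a + s * d) - g' a) * d) s :=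
    (((hg s hs).comp s (hline s)).sub
      (((hasDerivAt_id s).mul_const d).const_mul (g' a))).congr_deriv (by ring)
  have hslope (s : ℝ) (hs : s ∈ Set.Icc (0 : ℝ) 1) : |g' (a + s * d) - g' a| ≤ B * |d| * s := by
    have := norm_image_sub_le_of_norm_deriv_le_segment' (f := fun s => g' (a + s * d))
      (C := B * |d|) (fun s hs => ((hg' s hs).comp s (hline s)).hasDerivWithinAt)
      (fun s hs => by
        rw [norm_mul]
        exact mul_le_mul_of_nonneg_right (hB s (Set.Ico_subset_Icc_self hs)) (norm_nonneg d)) s hs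
    simpa using this
  have hbound := image_norm_le_of_norm_deriv_right_le_deriv_boundary
    (f := fun s => g (a + s * d) - g' a * (s * d) - g a) (B := fun s => B * d ^ 2 / 2 * s ^ 2)
    (B' := fun s => B * d ^ 2 * s)
    (fun s hs => ((hfst s hs).sub_const _).continuousAt.continuousWithinAt)
    (fun s hs => ((hfst s (Set.Ico_subset_Icc_self hs)).sub_const _).hasDerivWithinAt) (by simp)
    (fun s => ((hasDerivAt_pow 2 s).const_mul _).congr_deriv (by norm_num; ring))
    (fun s hs => by
      rw [norm_mul, Real.norm_eq_abs, Real.norm_eq_abs, ← sq_abs d]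
      nlinarith [hslope s (Set.Ico_subset_Icc_self hs), abs_nonneg d])
    (Set.right_mem_Icc.2 zero_le_one)
  simpa [sub_right_comm] using hbound

end

/-! ### Sums over separated points -/

section

/-- A bound for `∑ x ^ (-(k + 3))` over points `x ≥ d` that are pairwise at least `δ` apart: the
first point contributes at most `1 / d ^ (k + 3)`, the remaining ones are summed by telescoping. -/
def tailBound (δ : ℝ) (k : ℕ) (d : ℝ) : ℝ :=
  1 / d ^ (k + 3) + 1 / (2 * δ * d * (d + δ) ^ (k + 1))

variable {δ d : ℝ} {ι : Type*} {Y : ι → ℝ}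

lemma one_div_cube_le_telescope {x : ℝ} (hδ : 0 < δ) (hx : δ < x) :
    1 / x ^ 3 ≤ 1 / (2 * δ) * (1 / ((x - δ) * x) - 1 / (x * (x + δ))) := by
  have hx₀ : 0 < x := hδ.trans hx
  have hsub : 0 < x - δ := sub_pos.2 hx
  calc 1 / x ^ 3 ≤ 1 / ((x - δ) * x * (x + δ)) :=
        one_div_le_one_div_of_le (by positivity) (by nlinarith [mul_pos hx₀ (pow_pos hδ 2)])
    _ = 1 / (2 * δ) * (1 / ((x - δ) * x) - 1 / (x * (x + δ))) := by
      field_simp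
      ring

lemma sum_range_one_div_cube_le (hδ : 0 < δ) (hd : 0 < d) (n : ℕ) :
    ∑ i ∈ Finset.range n, 1 / (d + δ * (i + 1)) ^ 3 ≤
      1 / (2 * δ) * (1 / (d * (d + δ)) - 1 / ((d + δ * n) * (d + δ * (n + 1)))) := by
  induction n with
  | zero => simp
  | succ n ih =>
    have hstep := one_div_cube_le_telescope (x := d + δ * (n + 1)) hδ
      (by nlinarith [n.cast_nonneg (α := ℝ)])
    rw [show d + δ * (n + 1) - δ = d + δ * n by ring,
      show d + δ * (n + 1) + δ = d + δ * (n + 1 + 1) by ring] at hstep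
    rw [Finset.sum_range_succ]
    push_cast
    linarith

lemma sum_range_one_div_pow_le_tailBound (hδ : 0 < δ) (hd : 0 < d) (k n : ℕ) :
    ∑ i ∈ Finset.range n, 1 / (d + δ * i) ^ (k + 3) ≤ tailBound δ k d := by
  rcases n with _ | n
  · rw [Finset.range_zero, Finset.sum_empty, tailBound]
    positivity
  rw [Finset.sum_range_succ', tailBound, add_comm, Nat.cast_zero, mul_zero, add_zero]
  gcongr
  calc ∑ i ∈ Finset.range n, 1 / (d + δ * (i + 1 : ℕ)) ^ (k + 3)
      ≤ ∑ i ∈ Finset.range n, 1 / (d + δ) ^ k * (1 / (d + δ * (i + 1)) ^ 3) := by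
        refine Finset.sum_le_sum fun i _ => ?_
        rw [one_div_mul_one_div, Nat.cast_succ, pow_add]
        gcongr
        nlinarith [i.cast_nonneg (α := ℝ)]
    _ ≤ 1 / (d + δ) ^ k * (1 / (2 * δ) * (1 / (d * (d + δ)))) := by
        rw [← Finset.mul_sum]
        gcongr
        refine (sum_range_one_div_cube_le hδ hd n).trans ?_
        gcongr
        exact sub_le_self _ (by positivity)
    _ = 1 / (2 * δ * d * (d + δ) ^ (k + 1)) := by
        rw [pow_succ]
        field_simp

lemma sum_one_div_pow_le_tailBound (hδ : 0 < δ) (hd : 0 < d) (k : ℕ) {s : Finset ι}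
    (hsep : (s : Set ι).Pairwise fun i j => δ ≤ |Y i - Y j|) (hY : ∀ i ∈ s, d ≤ Y i) :
    ∑ i ∈ s, 1 / Y i ^ (k + 3) ≤ tailBound δ k d := by
  classical
  set n : ι → ℕ := fun i => ⌊(Y i - d) / δ⌋₊
  have hlow : ∀ i ∈ s, d + δ * n i ≤ Y i := fun i hi => by
    have := Nat.floor_le (div_nonneg (sub_nonneg.2 (hY i hi)) hδ.le)
    rw [le_div_iff₀ hδ] at this
    linarith
  have hhigh (i : ι) : Y i < d + δ * n i + δ := by
    have := Nat.lt_floor_add_one ((Y i - d) / δ)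
    rw [div_lt_iff₀ hδ] at this
    linarith
  have hinj : Set.InjOn n s := by
    intro i hi j hj hij
    by_contra hne
    have hlowi := hlow i hi
    have hhighi := hhigh i
    rw [hij] at hlowi hhighi
    rcases le_abs.1 (hsep hi hj hne) with h | h <;> linarith [hlow j hj, hhigh j]
  calc ∑ i ∈ s, 1 / Y i ^ (k + 3) ≤ ∑ i ∈ s, 1 / (d + δ * n i) ^ (k + 3) :=
        Finset.sum_le_sum fun i hi => one_div_le_one_div_of_le (by positivity)
          (pow_le_pow_left₀ (by positivity) (hlow i hi) _)
    _ = ∑ m ∈ s.image n, 1 / (d + δ * m) ^ (k + 3) := by rw [Finset.sum_image hinj]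
    _ ≤ ∑ m ∈ Finset.range ((s.image n).sup id + 1), 1 / (d + δ * m) ^ (k + 3) :=
        Finset.sum_le_sum_of_subset_of_nonneg (Finset.subset_range_sup_succ _)
          fun _ _ _ => by positivity
    _ ≤ tailBound δ k d := sum_range_one_div_pow_le_tailBound hδ hd k _

lemma sum_one_div_abs_sub_pow_le (hδ : 0 < δ) (hd : 0 < d) (k : ℕ) {s : Finset ι} {c e : ℝ}
    (hsep : (s : Set ι).Pairwise fun i j => δ ≤ |Y i - Y j|)
    (hY : ∀ i ∈ s, d + e ≤ |c - Y i|) :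
    ∑ i ∈ s, 1 / (|c - Y i| - e) ^ (k + 3) ≤ 2 * tailBound δ k d := by
  rw [← Finset.sum_filter_add_sum_filter_not s fun i => c ≤ Y i, two_mul]
  refine add_le_add ?_ ?_
  · have hside : ∀ i ∈ s.filter fun i => c ≤ Y i, |c - Y i| - e = Y i - c - e := fun i hi => by
      rw [abs_sub_comm, abs_of_nonneg (sub_nonneg.2 (Finset.mem_filter.1 hi).2)]
    rw [Finset.sum_congr rfl fun i hi => by rw [hside i hi]]
    refine sum_one_div_pow_le_tailBound hδ hd k (Y := fun i => Y i - c - e) ?_ fun i hi => ?_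
    · intro i hi j hj hij
      simpa using hsep (Finset.mem_filter.1 hi).1 (Finset.mem_filter.1 hj).1 hij
    · linarith [hside i hi, hY i (Finset.mem_filter.1 hi).1]
  · have hside : ∀ i ∈ s.filter fun i => ¬c ≤ Y i, |c - Y i| - e = c - Y i - e := fun i hi => by
      rw [abs_of_pos (sub_pos.2 (not_le.1 (Finset.mem_filter.1 hi).2))]
    rw [Finset.sum_congr rfl fun i hi => by rw [hside i hi]]
    refine sum_one_div_pow_le_tailBound hδ hd k (Y := fun i => c - Y i - e) ?_ fun i hi => ?_
    · intro i hi j hj hij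
      simpa using hsep (Finset.mem_filter.1 hj).1 (Finset.mem_filter.1 hi).1 hij.symm
    · linarith [hside i hi, hY i (Finset.mem_filter.1 hi).1]

lemma summable_and_norm_tsum_le_of_separated (hδ : 0 < δ) (hd : 0 < d) {c e P Q : ℝ}
    (hP : 0 ≤ P) (hQ : 0 ≤ Q) (hsep : Pairwise fun i j => δ ≤ |Y i - Y j|)
    (hY : ∀ i, d + e ≤ |c - Y i|) {F : ι → ℂ}
    (hF : ∀ i, ‖F i‖ ≤ P / (|c - Y i| - e) ^ 4 + Q / (|c - Y i| - e) ^ 3) :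
    Summable F ∧ ‖∑' i, F i‖ ≤ 2 * (P * tailBound δ 1 d + Q * tailBound δ 0 d) := by
  have hsum (s : Finset ι) :
      ∑ i ∈ s, ‖F i‖ ≤ 2 * (P * tailBound δ 1 d + Q * tailBound δ 0 d) := by
    have hpow (k : ℕ) := sum_one_div_abs_sub_pow_le hδ hd k (hsep.set_pairwise s) fun i _ => hY i
    calc ∑ i ∈ s, ‖F i‖
        ≤ ∑ i ∈ s, (P * (1 / (|c - Y i| - e) ^ 4) + Q * (1 / (|c - Y i| - e) ^ 3)) :=
          Finset.sum_le_sum fun i _ => by simpa only [mul_one_div] using hF i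
      _ = P * ∑ i ∈ s, 1 / (|c - Y i| - e) ^ 4 + Q * ∑ i ∈ s, 1 / (|c - Y i| - e) ^ 3 := by
          rw [Finset.sum_add_distrib, Finset.mul_sum, Finset.mul_sum]
      _ ≤ P * (2 * tailBound δ 1 d) + Q * (2 * tailBound δ 0 d) := by
          gcongr
          exacts [hpow 1, hpow 0]
      _ = 2 * (P * tailBound δ 1 d + Q * tailBound δ 0 d) := by ring
  have hsummable := summable_of_sum_le (fun i => norm_nonneg (F i)) hsum
  exact ⟨hsummable.of_norm,
    (norm_tsum_le_tsum_norm hsummable).trans (hsummable.tsum_le_of_sum_le hsum)⟩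

lemma summable_and_norm_tsum_sub_sum_le_of_separated (hδ : 0 < δ) (hd : 0 < d) {c e P Q : ℝ}
    (hP : 0 ≤ P) (hQ : 0 ≤ Q) (hsep : Pairwise fun i j => δ ≤ |Y i - Y j|)
    (s : Finset ι) (hY : ∀ i ∉ s, d + e ≤ |c - Y i|) {F : ι → ℂ}
    (hF : ∀ i ∉ s, ‖F i‖ ≤ P / (|c - Y i| - e) ^ 4 + Q / (|c - Y i| - e) ^ 3) :
    Summable F ∧ ‖∑' i, F i - ∑ i ∈ s, F i‖ ≤
      2 * (P * tailBound δ 1 d + Q * tailBound δ 0 d) := by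
  obtain ⟨hsummable, hle⟩ := summable_and_norm_tsum_le_of_separated hδ hd hP hQ
    (Y := fun i : {i // i ∉ s} => Y i) (F := fun i => F i)
    (fun _ _ hij => hsep (Subtype.coe_injective.ne hij)) (fun i => hY i i.2) (fun i => hF i i.2)
  have hsum := s.hasSum_compl_iff.1 hsummable.hasSum
  exact ⟨hsum.summable, by rwa [hsum.tsum_eq, add_sub_cancel_right]⟩

end

/-! ### The interpolant on the line -/

section

/-- The summands of a superposition of translates of two kernels `g` and `h`, centred at the
nodes `Y i` and with coefficients `α i` and `β i`. -/
def kernelComb {ι : Type*} (g h : ℝ → ℝ) (Y : ι → ℝ) (α β : ι → ℂ) (x : ℝ) (i : ι) : ℂ :=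
  α i * (g (x - Y i) : ℂ) + β i * (h (x - Y i) : ℂ)

lemma norm_mul_ofReal_add_mul_ofReal_le {α β : ℂ} {a b g h G H : ℝ} (hα : ‖α‖ ≤ a) (hβ : ‖β‖ ≤ b)
    (hg : |g| ≤ G) (hh : |h| ≤ H) : ‖α * (g : ℂ) + β * (h : ℂ)‖ ≤ a * G + b * H := by
  have ha := (norm_nonneg α).trans hα
  have hb := (norm_nonneg β).trans hβ
  refine (norm_add_le _ _).trans ?_
  rw [norm_mul, norm_mul, norm_real, norm_real, Real.norm_eq_abs, Real.norm_eq_abs]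
  gcongr

lemma summable_kernelComb_and_norm_tsum_sub_sum_le {ι : Type*} {δ d a b A B x : ℝ} {Y : ι → ℝ}
    {α β : ι → ℂ} {g h : ℝ → ℝ} (hδ : 0 < δ) (hd : 0 < d) (ha : 0 ≤ a) (hb : 0 ≤ b)
    (hA : 0 ≤ A) (hB : 0 ≤ B) (hsep : Pairwise fun i j => δ ≤ |Y i - Y j|)
    (hα : ∀ i, ‖α i‖ ≤ a) (hβ : ∀ i, ‖β i‖ ≤ b)
    (hg : ∀ y, d ≤ |y| → |g y| ≤ A / |y| ^ 4) (hh : ∀ y, d ≤ |y| → |h y| ≤ B / |y| ^ 3)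
    (s : Finset ι) (hY : ∀ i ∉ s, d ≤ |x - Y i|) :
    Summable (kernelComb g h Y α β x) ∧
      ‖∑' i, kernelComb g h Y α β x i - ∑ i ∈ s, kernelComb g h Y α β x i‖ ≤
        2 * (a * A * tailBound δ 1 d + b * B * tailBound δ 0 d) := by
  refine summable_and_norm_tsum_sub_sum_le_of_separated (c := x) (e := 0) hδ hd (by positivity)
    (by positivity) hsep s (fun i hi => by simpa using hY i hi) fun i hi => ?_
  rw [sub_zero, mul_div_assoc, mul_div_assoc]
  exact norm_mul_ofReal_add_mul_ofReal_le (hα i) (hβ i) (hg _ (hY i hi)) (hh _ (hY i hi))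

lemma tailBound_one_le : tailBound 3.1 1 3.1 ≤ 0.01219 := by norm_num [tailBound]

lemma tailBound_zero_le : tailBound 3.1 0 3.1 ≤ 0.04196 := by norm_num [tailBound]

variable {R : ℕ} {Y : Fin R × ℤ → ℝ} {x d : ℝ}

/-- The superposition of value and slope kernels at the nodes `Y (j, m)`, with coefficients
that depend on `j` only (so that it is periodic when the nodes are). -/
def interpolant (Y : Fin R × ℤ → ℝ) (α β : Fin R → ℂ) (x : ℝ) : ℂ :=
  ∑' i, kernelComb valueKernel slopeKernel Y (fun i => α i.1) (fun i => β i.1) x i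

/-- The termwise derivative of `interpolant`. -/
def interpolantDeriv (Y : Fin R × ℤ → ℝ) (α β : Fin R → ℂ) (x : ℝ) : ℂ :=
  ∑' i, kernelComb valueKernel' slopeKernel' Y (fun i => α i.1) (fun i => β i.1) x i

lemma le_abs_sub_of_ne (hsep : Pairwise fun i j => 3.1 ≤ |Y i - Y j|) {i₀ i : Fin R × ℤ}
    (hi : i ≠ i₀) {r : ℝ} (hx : |x - Y i₀| ≤ r) : 3.1 - r ≤ |x - Y i| := by
  have hle : 3.1 ≤ |Y i - Y i₀| := hsep hi
  linarith [abs_sub_le (Y i) x (Y i₀), abs_sub_comm (Y i) x]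

lemma summable_and_norm_interpolant_sub_sum_le (hsep : Pairwise fun i j => 3.1 ≤ |Y i - Y j|)
    (α β : Fin R → ℂ) (hd : 0 < d) (s : Finset (Fin R × ℤ)) (hY : ∀ i ∉ s, d ≤ |x - Y i|) :
    Summable (kernelComb valueKernel slopeKernel Y (fun i => α i.1) (fun i => β i.1) x) ∧
      ‖interpolant Y α β x -
          ∑ i ∈ s, kernelComb valueKernel slopeKernel Y (fun i => α i.1) (fun i => β i.1) x i‖ ≤
        2 * (‖α‖ * tailBound 3.1 1 d + ‖β‖ * tailBound 3.1 0 d) := by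
  simpa only [interpolant, mul_one] using
    summable_kernelComb_and_norm_tsum_sub_sum_le (g := valueKernel) (h := slopeKernel)
      (by norm_num) hd (norm_nonneg α) (norm_nonneg β)
      zero_le_one zero_le_one hsep (fun i => norm_le_pi_norm α i.1) (fun i => norm_le_pi_norm β i.1)
      (fun y hy => abs_valueKernel_le (abs_pos.1 (hd.trans_le hy)))
      (fun y hy => abs_slopeKernel_le (abs_pos.1 (hd.trans_le hy))) s hY

lemma norm_interpolant_le_of_far (hsep : Pairwise fun i j => 3.1 ≤ |Y i - Y j|) (α β : Fin R → ℂ)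
    (hd : 0 < d) (hY : ∀ i, d ≤ |x - Y i|) :
    ‖interpolant Y α β x‖ ≤ 2 * (‖α‖ * tailBound 3.1 1 d + ‖β‖ * tailBound 3.1 0 d) := by
  simpa using (summable_and_norm_interpolant_sub_sum_le hsep α β hd ∅ fun i _ => hY i).2

lemma norm_interpolant_le_of_near (hsep : Pairwise fun i j => 3.1 ≤ |Y i - Y j|)
    (α β : Fin R → ℂ) {i₀ : Fin R × ℤ} {r G H : ℝ} (hr : r < 3.1) (hx : |x - Y i₀| ≤ r)
    (hG : |valueKernel (x - Y i₀)| ≤ G) (hH : |slopeKernel (x - Y i₀)| ≤ H) :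
    ‖interpolant Y α β x‖ ≤
      ‖α‖ * (G + 2 * tailBound 3.1 1 (3.1 - r)) + ‖β‖ * (H + 2 * tailBound 3.1 0 (3.1 - r)) := by
  have hother := (summable_and_norm_interpolant_sub_sum_le hsep α β (sub_pos.2 hr) {i₀}
    fun i hi => le_abs_sub_of_ne hsep (Finset.notMem_singleton.1 hi) hx).2
  rw [Finset.sum_singleton] at hother
  have hnear : ‖kernelComb valueKernel slopeKernel Y (fun i => α i.1) (fun i => β i.1) x i₀‖ ≤
      ‖α‖ * G + ‖β‖ * H :=
    norm_mul_ofReal_add_mul_ofReal_le (norm_le_pi_norm α i₀.1) (norm_le_pi_norm β i₀.1) hG hH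
  linarith [norm_le_norm_sub_add (interpolant Y α β x)
    (kernelComb valueKernel slopeKernel Y (fun i => α i.1) (fun i => β i.1) x i₀)]

lemma hasSum_interpolant (hsep : Pairwise fun i j => 3.1 ≤ |Y i - Y j|) (α β : Fin R → ℂ)
    (x : ℝ) : HasSum (kernelComb valueKernel slopeKernel Y (fun i => α i.1) (fun i => β i.1) x)
      (interpolant Y α β x) := by
  suffices ∃ s : Finset (Fin R × ℤ), ∀ i ∉ s, 1.55 ≤ |x - Y i| by
    obtain ⟨s, hs⟩ := this
    exact (summable_and_norm_interpolant_sub_sum_le hsep α β (by norm_num) s hs).1.hasSum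
  by_cases hnear : ∃ i₀, |x - Y i₀| ≤ 1.55
  · obtain ⟨i₀, hi₀⟩ := hnear
    refine ⟨{i₀}, fun i hi => ?_⟩
    linarith [le_abs_sub_of_ne hsep (Finset.notMem_singleton.1 hi) hi₀]
  · push Not at hnear
    exact ⟨∅, fun i _ => (hnear i).le⟩

lemma norm_interpolant_node_sub_le (hsep : Pairwise fun i j => 3.1 ≤ |Y i - Y j|)
    (α β : Fin R → ℂ) (i₀ : Fin R × ℤ) :
    ‖interpolant Y α β (Y i₀) - α i₀.1‖ ≤ 0.02438 * ‖α‖ + 0.08392 * ‖β‖ := by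
  have hle := (summable_and_norm_interpolant_sub_sum_le hsep α β (by norm_num : (0 : ℝ) < 3.1) {i₀}
    fun i hi => by simpa using hsep (Finset.notMem_singleton.1 hi).symm).2
  rw [Finset.sum_singleton, kernelComb, sub_self, valueKernel_zero, slopeKernel_zero, ofReal_one,
    ofReal_zero, mul_one, mul_zero, add_zero] at hle
  nlinarith [norm_nonneg α, norm_nonneg β, tailBound_one_le, tailBound_zero_le]

lemma summable_and_norm_interpolantDeriv_node_sub_le
    (hsep : Pairwise fun i j => 3.1 ≤ |Y i - Y j|) (α β : Fin R → ℂ) (i₀ : Fin R × ℤ) :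
    Summable (kernelComb valueKernel' slopeKernel' Y (fun i => α i.1) (fun i => β i.1) (Y i₀)) ∧
      ‖interpolantDeriv Y α β (Y i₀) - β i₀.1‖ ≤ 0.0634 * ‖α‖ + 0.1906 * ‖β‖ := by
  obtain ⟨hsummable, hle⟩ := summable_kernelComb_and_norm_tsum_sub_sum_le (by norm_num)
    (by norm_num) (norm_nonneg α) (norm_nonneg β) (by norm_num) (by norm_num) hsep
    (fun i => norm_le_pi_norm α i.1) (fun i => norm_le_pi_norm β i.1)
    (fun _ => abs_valueKernel'_le) (fun _ => abs_slopeKernel'_le) {i₀}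
    fun i hi => by simpa using hsep (Finset.notMem_singleton.1 hi).symm
  refine ⟨hsummable, ?_⟩
  rw [Finset.sum_singleton, kernelComb, sub_self, valueKernel'_zero, slopeKernel'_zero, ofReal_one,
    ofReal_zero, mul_one, mul_zero, zero_add] at hle
  rw [interpolantDeriv]
  nlinarith [norm_nonneg α, norm_nonneg β, tailBound_one_le, tailBound_zero_le]

lemma abs_kernels_taylor_le {u r : ℝ} (hd : |d| ≤ r) (hu : 2.45 + r ≤ |u|) :
    |valueKernel (u + d) - valueKernel u - valueKernel' u * d| ≤
        11.6 / (|u| - r) ^ 4 * d ^ 2 / 2 ∧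
      |slopeKernel (u + d) - slopeKernel u - slopeKernel' u * d| ≤
        9.2 / (|u| - r) ^ 3 * d ^ 2 / 2 := by
  have hpos : 0 < |u| - r := by linarith
  have hseg : ∀ s ∈ Set.Icc (0 : ℝ) 1, |u| - r ≤ |u + s * d| := fun s hs => by
    have hsd : |s * d| ≤ r := by
      rw [abs_mul, abs_of_nonneg hs.1]
      exact (mul_le_of_le_one_left (abs_nonneg d) hs.2).trans hd
    have := abs_sub_abs_le_abs_sub u (-(s * d))
    rw [abs_neg, sub_neg_eq_add] at this
    linarith
  have hfar : ∀ s ∈ Set.Icc (0 : ℝ) 1, 2.45 ≤ |u + s * d| := fun s hs => by linarith [hseg s hs]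
  have hne : ∀ s ∈ Set.Icc (0 : ℝ) 1, u + s * d ≠ 0 :=
    fun s hs => abs_pos.1 (hpos.trans_le (hseg s hs))
  constructor
  · refine abs_sub_sub_mul_le (fun s hs => hasDerivAt_valueKernel (hne s hs))
      (fun s hs => hasDerivAt_valueKernel' (hne s hs))
      fun s hs => (abs_valueKernel''_le (hfar s hs)).trans ?_
    gcongr
    exact hseg s hs
  · refine abs_sub_sub_mul_le (fun s hs => hasDerivAt_slopeKernel (hne s hs))
      (fun s hs => hasDerivAt_slopeKernel' (hne s hs))
      fun s hs => (abs_slopeKernel''_le (hfar s hs)).trans ?_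
    gcongr
    exact hseg s hs

lemma norm_interpolant_taylor_sub_le (hsep : Pairwise fun i j => 3.1 ≤ |Y i - Y j|)
    (α β : Fin R → ℂ) (i₀ : Fin R × ℤ) (hd : |d| ≤ 0.65) :
    ‖interpolant Y α β (Y i₀ + d) - interpolant Y α β (Y i₀) -
        interpolantDeriv Y α β (Y i₀) * d -
        (α i₀.1 * ((valueKernel d - 1 : ℝ) : ℂ) + β i₀.1 * ((slopeKernel d - d : ℝ) : ℂ))‖ ≤
      (0.347 * ‖α‖ + 0.735 * ‖β‖) * d ^ 2 := by
  set rem : Fin R × ℤ → ℂ := fun i =>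
    α i.1 * ((valueKernel (Y i₀ - Y i + d) - valueKernel (Y i₀ - Y i) -
        valueKernel' (Y i₀ - Y i) * d : ℝ) : ℂ) +
      β i.1 * ((slopeKernel (Y i₀ - Y i + d) - slopeKernel (Y i₀ - Y i) -
        slopeKernel' (Y i₀ - Y i) * d : ℝ) : ℂ)
  have hrem : HasSum rem (interpolant Y α β (Y i₀ + d) - interpolant Y α β (Y i₀) -
      interpolantDeriv Y α β (Y i₀) * d) := by
    refine (((hasSum_interpolant hsep α β (Y i₀ + d)).sub (hasSum_interpolant hsep α β (Y i₀))).sub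
      ((summable_and_norm_interpolantDeriv_node_sub_le hsep α β i₀).1.hasSum.mul_right
        (d : ℂ))).congr_fun fun i => ?_
    simp only [rem, kernelComb, add_sub_right_comm]
    push_cast
    ring
  have hnode : rem i₀ =
      α i₀.1 * ((valueKernel d - 1 : ℝ) : ℂ) + β i₀.1 * ((slopeKernel d - d : ℝ) : ℂ) := by
    simp only [rem, sub_self, zero_add, valueKernel_zero, slopeKernel_zero, valueKernel'_zero,
      slopeKernel'_zero, zero_mul, one_mul, sub_zero]
  have hfar : ∀ i ∉ ({i₀} : Finset (Fin R × ℤ)), 2.45 + 0.65 ≤ |Y i₀ - Y i| := fun i hi => by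
    linarith [hsep (Finset.notMem_singleton.1 hi).symm]
  have hle := (summable_and_norm_tsum_sub_sum_le_of_separated (F := rem)
    (P := ‖α‖ * (11.6 * d ^ 2 / 2)) (Q := ‖β‖ * (9.2 * d ^ 2 / 2)) (by norm_num) (by norm_num)
    (by positivity) (by positivity) hsep {i₀} hfar fun i hi => ?_).2
  · rw [hrem.tsum_eq, Finset.sum_singleton, hnode] at hle
    have hone : tailBound 3.1 1 2.45 ≤ 0.0299 := by norm_num [tailBound]
    have hzero : tailBound 3.1 0 2.45 ≤ 0.07988 := by norm_num [tailBound]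
    have hα : 0 ≤ ‖α‖ * d ^ 2 := by positivity
    have hβ : 0 ≤ ‖β‖ * d ^ 2 := by positivity
    refine hle.trans ?_
    nlinarith
  · obtain ⟨hvalue, hslope⟩ := abs_kernels_taylor_le hd (hfar i hi)
    refine (norm_mul_ofReal_add_mul_ofReal_le (norm_le_pi_norm α i.1) (norm_le_pi_norm β i.1)
      hvalue hslope).trans (le_of_eq ?_)
    ring

lemma exists_map_eq_and_map_eq_of_norm_sub_le {V : Type*} [NormedAddCommGroup V] [NormedSpace ℂ V]
    [FiniteDimensional ℂ V] {T₀ T₁ : V × V →ₗ[ℂ] V} {p q r s : ℝ}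
    (h₀ : ∀ α β, ‖T₀ (α, β) - α‖ ≤ p * ‖α‖ + q * ‖β‖)
    (h₁ : ∀ α β, ‖T₁ (α, β) - β‖ ≤ r * ‖α‖ + s * ‖β‖) (hpr : p + r < 1) (hqs : q + s < 1)
    (v w : V) : ∃ α β, T₀ (α, β) = v ∧ T₁ (α, β) = w := by
  have hinj : Function.Injective (T₀.prod T₁) := by
    refine (injective_iff_map_eq_zero _).2 fun ⟨α, β⟩ hzero => ?_
    obtain ⟨hT₀, hT₁⟩ := Prod.mk.inj hzero
    have hα := h₀ α β
    have hβ := h₁ α β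
    rw [hT₀, zero_sub, norm_neg] at hα
    rw [hT₁, zero_sub, norm_neg] at hβ
    have hα₀ : ‖α‖ = 0 := by nlinarith [norm_nonneg α, norm_nonneg β]
    have hβ₀ : ‖β‖ = 0 := by nlinarith [norm_nonneg α, norm_nonneg β]
    rw [norm_eq_zero.1 hα₀, norm_eq_zero.1 hβ₀, Prod.mk_zero_zero]
  obtain ⟨⟨α, β⟩, hαβ⟩ := LinearMap.injective_iff_surjective.1 hinj (v, w)
  exact ⟨α, β, Prod.mk.inj hαβ⟩

lemma exists_linearMap_eq_tsum_kernelComb {g h : ℝ → ℝ}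
    (hsum : ∀ (α β : Fin R → ℂ) j,
      Summable (kernelComb g h Y (fun i => α i.1) (fun i => β i.1) (Y (j, 0)))) :
    ∃ T : (Fin R → ℂ) × (Fin R → ℂ) →ₗ[ℂ] Fin R → ℂ, ∀ α β j,
      T (α, β) j = ∑' i, kernelComb g h Y (fun i => α i.1) (fun i => β i.1) (Y (j, 0)) i := by
  refine ⟨{
    toFun c j := ∑' i, kernelComb g h Y (fun i => c.1 i.1) (fun i => c.2 i.1) (Y (j, 0)) i
    map_add' c c' := funext fun j => ?_
    map_smul' z c := funext fun j => ?_ }, fun _ _ _ => rfl⟩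
  · rw [Pi.add_apply, ← (hsum c.1 c.2 j).tsum_add (hsum c'.1 c'.2 j)]
    refine tsum_congr fun i => ?_
    simp only [kernelComb, Prod.fst_add, Prod.snd_add, Pi.add_apply]
    ring
  · rw [RingHom.id_apply, Pi.smul_apply, smul_eq_mul, ← tsum_mul_left]
    refine tsum_congr fun i => ?_
    simp only [kernelComb, Prod.smul_fst, Prod.smul_snd, Pi.smul_apply, smul_eq_mul]
    ring

lemma norm_interpolant_nodes_sub_le (hsep : Pairwise fun i j => 3.1 ≤ |Y i - Y j|)
    (α β : Fin R → ℂ) :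
    ‖(fun j => interpolant Y α β (Y (j, 0))) - α‖ ≤ 0.02438 * ‖α‖ + 0.08392 * ‖β‖ :=
  (pi_norm_le_iff_of_nonneg (by positivity)).2 fun j =>
    norm_interpolant_node_sub_le hsep α β (j, 0)

lemma norm_interpolantDeriv_nodes_sub_le (hsep : Pairwise fun i j => 3.1 ≤ |Y i - Y j|)
    (α β : Fin R → ℂ) :
    ‖(fun j => interpolantDeriv Y α β (Y (j, 0))) - β‖ ≤ 0.0634 * ‖α‖ + 0.1906 * ‖β‖ :=
  (pi_norm_le_iff_of_nonneg (by positivity)).2 fun j =>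
    (summable_and_norm_interpolantDeriv_node_sub_le hsep α β (j, 0)).2

lemma exists_interpolant_eq_and_interpolantDeriv_eq
    (hsep : Pairwise fun i j => 3.1 ≤ |Y i - Y j|) (v w : Fin R → ℂ) :
    ∃ α β : Fin R → ℂ, (∀ j, interpolant Y α β (Y (j, 0)) = v j) ∧
      ∀ j, interpolantDeriv Y α β (Y (j, 0)) = w j := by
  obtain ⟨T₀, hT₀⟩ := exists_linearMap_eq_tsum_kernelComb (Y := Y) (g := valueKernel)
    (h := slopeKernel) fun α β j => (hasSum_interpolant hsep α β (Y (j, 0))).summable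
  obtain ⟨T₁, hT₁⟩ := exists_linearMap_eq_tsum_kernelComb fun α β j =>
    (summable_and_norm_interpolantDeriv_node_sub_le hsep α β (j, 0)).1
  have h₀ : ∀ α β, T₀ (α, β) = fun j => interpolant Y α β (Y (j, 0)) :=
    fun α β => funext (hT₀ α β)
  have h₁ : ∀ α β, T₁ (α, β) = fun j => interpolantDeriv Y α β (Y (j, 0)) :=
    fun α β => funext (hT₁ α β)
  obtain ⟨α, β, hv, hw⟩ := exists_map_eq_and_map_eq_of_norm_sub_le
    (fun α β => h₀ α β ▸ norm_interpolant_nodes_sub_le hsep α β)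
    (fun α β => h₁ α β ▸ norm_interpolantDeriv_nodes_sub_le hsep α β)
    (by norm_num) (by norm_num) v w
  exact ⟨α, β, congr_fun ((h₀ α β).symm.trans hv), congr_fun ((h₁ α β).symm.trans hw)⟩

end

/-! ### Dual interpolants on the line -/

section

variable {R : ℕ} {Y : Fin R × ℤ → ℝ} {α β v w : Fin R → ℂ} {x d : ℝ}

lemma norm_coeff_sub_le_of_interpolant_eq (hsep : Pairwise fun i j => 3.1 ≤ |Y i - Y j|)
    (hval : ∀ j, interpolant Y α β (Y (j, 0)) = v j)
    (hderiv : ∀ j, interpolantDeriv Y α β (Y (j, 0)) = w j) :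
    ‖α - v‖ ≤ 0.02438 * ‖α‖ + 0.08392 * ‖β‖ ∧ ‖β - w‖ ≤ 0.0634 * ‖α‖ + 0.1906 * ‖β‖ := by
  rw [norm_sub_rev α, norm_sub_rev β, ← funext hval, ← funext hderiv]
  exact ⟨norm_interpolant_nodes_sub_le hsep α β, norm_interpolantDeriv_nodes_sub_le hsep α β⟩

lemma norm_interpolant_le_of_mem_annulus (hsep : Pairwise fun i j => 3.1 ≤ |Y i - Y j|)
    {i₀ : Fin R × ℤ} {ρ r : ℝ} (hρ : 0 ≤ ρ) (hρx : ρ ≤ |x - Y i₀|) (hxr : |x - Y i₀| ≤ r)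
    (hr : r ≤ 2) :
    ‖interpolant Y α β x‖ ≤
      ‖α‖ * ((1 - ρ ^ 2 / 6 + ρ ^ 4 / 100) ^ 4 + 2 * tailBound 3.1 1 (3.1 - r)) +
        ‖β‖ * ((1 - ρ ^ 2 / 6 + ρ ^ 4 / 100) ^ 3 + 2 * tailBound 3.1 0 (3.1 - r)) := by
  obtain ⟨hvalue, hslope⟩ := abs_kernels_le_of_sinc_le (hxr.trans hr)
    (sinc_le_of_le_abs hρ hρx (hxr.trans hr))
  exact norm_interpolant_le_of_near hsep α β (by linarith) hxr hvalue hslope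

lemma norm_interpolant_le_of_forall_le_abs_sub (hsep : Pairwise fun i j => 3.1 ≤ |Y i - Y j|)
    (hα : ‖α‖ ≤ 1.0321) (hβ : ‖β‖ ≤ 0.0811) (hx : ∀ i, 0.65 ≤ |x - Y i|) :
    ‖interpolant Y α β x‖ ≤ 0.99 := by
  suffices ∃ G H, 0 ≤ G ∧ 0 ≤ H ∧ ‖interpolant Y α β x‖ ≤ ‖α‖ * G + ‖β‖ * H ∧
      1.0321 * G + 0.0811 * H ≤ 0.99 by
    obtain ⟨G, H, hG, hH, hle, hGH⟩ := this
    exact hle.trans (le_trans (by gcongr) hGH)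
  by_cases hnear : ∃ i₀, |x - Y i₀| ≤ 1.55
  · obtain ⟨i₀, hi₀⟩ := hnear
    rcases le_total |x - Y i₀| 1 with hle | hge
    · exact ⟨_, _, by norm_num [tailBound], by norm_num [tailBound],
        norm_interpolant_le_of_mem_annulus hsep (by norm_num) (hx i₀) hle (by norm_num),
        by norm_num [tailBound]⟩
    · exact ⟨_, _, by norm_num [tailBound], by norm_num [tailBound],
        norm_interpolant_le_of_mem_annulus hsep zero_le_one hge hi₀ (by norm_num),
        by norm_num [tailBound]⟩
  · push Not at hnear
    have hle := norm_interpolant_le_of_far hsep α β (by norm_num) fun i => (hnear i).le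
    exact ⟨2 * tailBound 3.1 1 1.55, 2 * tailBound 3.1 0 1.55, by norm_num [tailBound],
      by norm_num [tailBound], hle.trans_eq (by ring), by norm_num [tailBound]⟩

lemma norm_interpolant_node_add_le (hsep : Pairwise fun i j => 3.1 ≤ |Y i - Y j|)
    (hα : ‖α‖ ≤ 1.0321) (hβ : ‖β‖ ≤ 0.0811) (hαv : ‖α - v‖ ≤ 0.0321) {j : Fin R}
    (hv : ‖v j‖ = 1) (hval : interpolant Y α β (Y (j, 0)) = v j)
    (hderiv : interpolantDeriv Y α β (Y (j, 0)) = 0) (hd : |d| ≤ 0.65) :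
    ‖interpolant Y α β (Y (j, 0) + d)‖ ≤ 1 - 0.1 * d ^ 2 := by
  have hrem := norm_interpolant_taylor_sub_le hsep α β (j, 0) hd
  rw [hval, hderiv, zero_mul, sub_zero] at hrem
  set rem := interpolant Y α β (Y (j, 0) + d) - v j -
    (α j * ((valueKernel d - 1 : ℝ) : ℂ) + β j * ((slopeKernel d - d : ℝ) : ℂ))
  have hdecomp : interpolant Y α β (Y (j, 0) + d) = rem + v j * (valueKernel d : ℂ) +
      ((α - v) j * ((valueKernel d - 1 : ℝ) : ℂ) + β j * ((slopeKernel d - d : ℝ) : ℂ)) := by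
    simp only [rem, Pi.sub_apply]
    push_cast
    ring
  have hmain : ‖v j * (valueKernel d : ℂ)‖ ≤ 1 - 0.585 * d ^ 2 := by
    rw [norm_mul, hv, one_mul, norm_real, Real.norm_of_nonneg (valueKernel_nonneg d)]
    exact valueKernel_le_one_sub_mul_sq hd
  have hcorr := norm_mul_ofReal_add_mul_ofReal_le ((norm_le_pi_norm (α - v) j).trans hαv)
    ((norm_le_pi_norm β j).trans hβ) (abs_valueKernel_sub_one_le d)
    (abs_slopeKernel_sub_self_le hd)
  rw [hdecomp]
  refine norm_add₃_le.trans ?_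
  nlinarith [sq_nonneg d]

lemma norm_interpolant_node_add_sub_le (hsep : Pairwise fun i j => 3.1 ≤ |Y i - Y j|)
    (hα : ‖α‖ ≤ 1.5) (hβ : ‖β‖ ≤ 5.1) (j : Fin R) (hd : |d| ≤ 0.65) :
    ‖interpolant Y α β (Y (j, 0) + d) - interpolant Y α β (Y (j, 0)) -
        interpolantDeriv Y α β (Y (j, 0)) * d‖ ≤ 8 * d ^ 2 := by
  have hrem := norm_interpolant_taylor_sub_le hsep α β (j, 0) hd
  have hnode := norm_mul_ofReal_add_mul_ofReal_le ((norm_le_pi_norm α j).trans hα)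
    ((norm_le_pi_norm β j).trans hβ) (abs_valueKernel_sub_one_le d)
    (abs_slopeKernel_sub_self_le hd)
  refine (norm_le_norm_sub_add _ _).trans (add_le_add hrem hnode |>.trans ?_)
  nlinarith [sq_nonneg d]

lemma norm_interpolant_le (hsep : Pairwise fun i j => 3.1 ≤ |Y i - Y j|)
    (hα : ‖α‖ ≤ 1.5) (hβ : ‖β‖ ≤ 5.1) (x : ℝ) : ‖interpolant Y α β x‖ ≤ 11 := by
  by_cases hnear : ∃ i₀, |x - Y i₀| ≤ 1.55
  · obtain ⟨i₀, hi₀⟩ := hnear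
    have hle := norm_interpolant_le_of_mem_annulus (α := α) (β := β) hsep le_rfl
      (abs_nonneg (x - Y i₀)) hi₀ (by norm_num)
    refine hle.trans ?_
    norm_num [tailBound]
    linarith
  · push Not at hnear
    refine (norm_interpolant_le_of_far hsep α β (by norm_num) fun i => (hnear i).le).trans ?_
    norm_num [tailBound]
    linarith

lemma exists_interpolant_eq_and_norm_le (hsep : Pairwise fun i j => 3.1 ≤ |Y i - Y j|)
    (hv : ∀ j, ‖v j‖ = 1) :
    ∃ α β : Fin R → ℂ, (∀ j, interpolant Y α β (Y (j, 0)) = v j) ∧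
      (∀ j d, |d| ≤ 0.65 → ‖interpolant Y α β (Y (j, 0) + d)‖ ≤ 1 - 0.1 * d ^ 2) ∧
      ∀ x, (∀ i, 0.65 ≤ |x - Y i|) → ‖interpolant Y α β x‖ ≤ 0.99 := by
  obtain ⟨α, β, hval, hderiv⟩ := exists_interpolant_eq_and_interpolantDeriv_eq hsep v 0
  obtain ⟨hαv, hβw⟩ := norm_coeff_sub_le_of_interpolant_eq hsep hval hderiv
  have hv' : ‖v‖ ≤ 1 := (pi_norm_le_iff_of_nonneg zero_le_one).2 fun j => (hv j).le
  rw [sub_zero] at hβw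
  have hα : ‖α‖ ≤ 1.0321 := by linarith [norm_le_norm_sub_add α v]
  have hβ : ‖β‖ ≤ 0.0811 := by linarith
  exact ⟨α, β, hval, fun j d => norm_interpolant_node_add_le hsep hα hβ (by linarith) (hv j)
    (hval j) (hderiv j), fun x => norm_interpolant_le_of_forall_le_abs_sub hsep hα hβ⟩

lemma exists_norm_interpolant_sub_le (hsep : Pairwise fun i j => 3.1 ≤ |Y i - Y j|)
    (hv : ‖v‖ ≤ 1) (hw : ‖w‖ ≤ 4) :
    ∃ α β : Fin R → ℂ,
      (∀ j d, |d| ≤ 0.65 → ‖interpolant Y α β (Y (j, 0) + d) - v j - w j * d‖ ≤ 8 * d ^ 2) ∧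
      ∀ x, ‖interpolant Y α β x‖ ≤ 11 := by
  obtain ⟨α, β, hval, hderiv⟩ := exists_interpolant_eq_and_interpolantDeriv_eq hsep v w
  obtain ⟨hαv, hβw⟩ := norm_coeff_sub_le_of_interpolant_eq hsep hval hderiv
  have hα : ‖α‖ ≤ 1.5 := by linarith [norm_le_norm_sub_add α v, norm_le_norm_sub_add β w]
  have hβ : ‖β‖ ≤ 5.1 := by linarith [norm_le_norm_sub_add β w]
  refine ⟨α, β, fun j d hd => ?_, norm_interpolant_le hsep hα hβ⟩
  rw [← hval, ← hderiv]
  exact norm_interpolant_node_add_sub_le hsep hα hβ j hd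

end

/-! ### Pairing measures with polynomials on the circle -/

section

lemma distT_le_abs_sub_intCast (t : ℝ) (n : ℤ) : distT t ≤ |t - n| :=
  ciInf_le ⟨0, by rintro _ ⟨n, rfl⟩; exact abs_nonneg _⟩ n

lemma distT_eq_abs_sub_round (t : ℝ) : distT t = |t - round t| :=
  le_antisymm (distT_le_abs_sub_intCast t _) (le_ciInf (round_le t))

lemma distT_zero : distT 0 = 0 := by simp [distT_eq_abs_sub_round]

lemma distT_sub_le_add (x y z : ℝ) : distT (x - y) ≤ distT (x - z) + distT (y - z) := by
  rw [distT_eq_abs_sub_round (x - z), distT_eq_abs_sub_round (y - z)]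
  refine (distT_le_abs_sub_intCast _ (round (x - z) - round (y - z))).trans ?_
  refine (le_of_eq ?_).trans (abs_sub _ _)
  push_cast
  ring_nf

lemma exists_eq_add_intCast_and_abs_eq_distT (t s : ℝ) :
    ∃ (d : ℝ) (n : ℤ), s = t + d + n ∧ |d| = distT (t - s) :=
  ⟨s - t + round (t - s), -round (t - s), by push_cast; ring, by
    rw [distT_eq_abs_sub_round, abs_sub_comm]; ring_nf⟩

lemma norm2_eq_norm_toLp {n : ℕ} (y : Fin n → ℂ) : norm2 y = ‖WithLp.toLp 2 y‖ :=
  (EuclideanSpace.norm_eq _).symm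

lemma norm2_sub_le_of_norm2_add_sub_le {n : ℕ} {x y z : Fin n → ℂ} {ε : ℝ} (hz : norm2 z ≤ ε)
    (h : norm2 (x + z - y) ≤ ε) : norm2 (x - y) ≤ 2 * ε := by
  rw [norm2_eq_norm_toLp] at hz h ⊢
  have hsub : WithLp.toLp 2 (x - y) = WithLp.toLp 2 (x + z - y) - WithLp.toLp 2 z := by
    rw [← WithLp.toLp_sub]
    congr 1
    abel
  rw [hsub]
  linarith [norm_sub_le (WithLp.toLp 2 (x + z - y)) (WithLp.toLp 2 z)]

lemma trigExp_neg_mul_trigExp (n : ℤ) (t : ℝ) : trigExp (-n) t * trigExp n t = 1 := by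
  rw [← trigExp_add_freq, neg_add_cancel, trigExp]
  simp

lemma norm_trigExp (n : ℤ) (t : ℝ) : ‖trigExp n t‖ = 1 := by
  rw [trigExp, ← norm_exp_ofReal_mul_I (2 * π * n * t)]
  push_cast
  ring_nf

lemma trigExp_add_intCast (n : ℤ) (t : ℝ) (m : ℤ) : trigExp n (t + m) = trigExp n t := by
  rw [trigExp_add, mul_eq_left₀ (norm_ne_zero_iff.1 (by rw [norm_trigExp]; exact one_ne_zero)),
    trigExp, exp_eq_one_iff]
  exact ⟨n * m, by push_cast; ring⟩

lemma trigExp_neg_one_pow (k : ℕ) (t : ℝ) : trigExp (-1) t ^ k = trigExp (-k) t := by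
  rw [trigExp, trigExp, ← exp_nat_mul]
  push_cast
  ring_nf

lemma exists_trigExp_neg_one_eq {z : ℂ} (hz : ‖z‖ = 1) : ∃ t, trigExp (-1) t = z := by
  obtain ⟨θ, hθ⟩ := (norm_eq_one_iff z).1 hz
  refine ⟨-θ / (2 * π), ?_⟩
  rw [trigExp, ← hθ]
  push_cast
  field_simp

lemma exists_polynomial_eval_eq_of_mem_trigPoly {d : ℕ} {f : ℝ → ℂ} (hf : f ∈ trigPoly d) :
    ∃ P : Polynomial ℂ, P.natDegree ≤ 2 * d ∧
      ∀ t, P.eval (trigExp (-1) t) = f t * trigExp (-d) t := by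
  induction hf using Submodule.span_induction with
  | mem f h =>
    obtain ⟨n, ⟨hnl, hnu⟩, rfl⟩ := h
    obtain ⟨k, hk⟩ := Int.eq_ofNat_of_zero_le (sub_nonneg.2 hnu)
    refine ⟨Polynomial.X ^ k, by rw [Polynomial.natDegree_X_pow]; omega, fun t => ?_⟩
    rw [Polynomial.eval_X_pow, trigExp_neg_one_pow, ← trigExp_add_freq]
    congr 1
    omega
  | zero => exact ⟨0, by simp, by simp⟩
  | add f g _ _ hf hg =>
    obtain ⟨P, hP, hPf⟩ := hf
    obtain ⟨Q, hQ, hQg⟩ := hg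
    refine ⟨P + Q, Polynomial.natDegree_add_le_of_degree_le hP hQ, fun t => ?_⟩
    rw [Polynomial.eval_add, hPf, hQg, Pi.add_apply, add_mul]
  | smul c f _ hf =>
    obtain ⟨P, hP, hPf⟩ := hf
    refine ⟨c • P, (Polynomial.natDegree_smul_le c P).trans hP, fun t => ?_⟩
    rw [Polynomial.eval_smul, hPf, Pi.smul_apply, smul_mul_assoc]

variable {M R S : ℕ} {P : Polynomial ℂ} {C : ℝ}

lemma sum_sq_norm_coeff_le (hdeg : P.natDegree < M)
    (h : ∀ z : ℂ, ‖z‖ = 1 → ‖P.eval z‖ ≤ C) : ∑ k : Fin M, ‖P.coeff k‖ ^ 2 ≤ C ^ 2 := by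
  have hcoeff : ∑ k ∈ P.support, ‖P.coeff k‖ ^ 2 = ∑ k : Fin M, ‖P.coeff k‖ ^ 2 := by
    rw [Fin.sum_univ_eq_sum_range (fun k => ‖P.coeff k‖ ^ 2)]
    refine Finset.sum_subset (fun k hk => Finset.mem_range.2 ?_) fun k _ hk => ?_
    · exact (Polynomial.le_natDegree_of_mem_supp k hk).trans_lt hdeg
    · simp [Polynomial.notMem_support_iff.1 hk]
  rw [← hcoeff, Polynomial.sum_sq_norm_coeff_eq_circleAverage]
  refine Real.circleAverage_mono_on_of_le_circle ?_ fun z hz => ?_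
  · have hcont : Continuous fun z => ‖P.eval z‖ ^ 2 := by fun_prop
    exact hcont.continuousOn.circleIntegrable zero_le_one
  · have hz1 : ‖z‖ = 1 := by simpa using hz
    exact pow_le_pow_left₀ (norm_nonneg _) (h z hz1) 2

lemma sum_mul_eval_trigExp_eq (hdeg : P.natDegree < M) (a : Fin R → ℂ) (t : Fin R → ℝ) :
    ∑ j, a j * P.eval (trigExp (-1) (t j)) = ∑ k : Fin M, P.coeff k * fourierCoeffs M a t k := by
  have hterm (j : Fin R) : a j * P.eval (trigExp (-1) (t j)) =
      ∑ k : Fin M, P.coeff k * (a j * exp (-2 * π * I * (k : ℕ) * t j)) := by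
    rw [Polynomial.eval_eq_sum_range' hdeg, ← Fin.sum_univ_eq_sum_range
      (fun k => P.coeff k * trigExp (-1) (t j) ^ k), Finset.mul_sum]
    refine Finset.sum_congr rfl fun k _ => ?_
    rw [trigExp_neg_one_pow, trigExp]
    push_cast
    ring_nf
  simp_rw [hterm, fourierCoeffs, Finset.mul_sum]
  exact Finset.sum_comm

lemma norm_sum_mul_eval_sub_sum_mul_eval_le (hdeg : P.natDegree < M)
    (h : ∀ t, ‖P.eval (trigExp (-1) t)‖ ≤ C) (a : Fin R → ℂ) (t : Fin R → ℝ) (b : Fin S → ℂ)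
    (s : Fin S → ℝ) :
    ‖∑ j, a j * P.eval (trigExp (-1) (t j)) - ∑ k, b k * P.eval (trigExp (-1) (s k))‖ ≤
      C * norm2 (fourierCoeffs M a t - fourierCoeffs M b s) := by
  have hC : 0 ≤ C := (norm_nonneg _).trans (h 0)
  have hcoeff : ∑ k : Fin M, ‖P.coeff k‖ ^ 2 ≤ C ^ 2 := by
    refine sum_sq_norm_coeff_le hdeg fun z hz => ?_
    obtain ⟨t, rfl⟩ := exists_trigExp_neg_one_eq hz
    exact h t
  rw [sum_mul_eval_trigExp_eq hdeg, sum_mul_eval_trigExp_eq hdeg, ← Finset.sum_sub_distrib]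
  calc ‖∑ k : Fin M, (P.coeff k * fourierCoeffs M a t k - P.coeff k * fourierCoeffs M b s k)‖
      ≤ ∑ k : Fin M, ‖P.coeff k‖ * ‖(fourierCoeffs M a t - fourierCoeffs M b s) k‖ :=
        norm_sum_le_of_le _ fun k _ => by rw [← mul_sub, norm_mul, Pi.sub_apply]
    _ ≤ √(∑ k : Fin M, ‖P.coeff k‖ ^ 2) * norm2 (fourierCoeffs M a t - fourierCoeffs M b s) :=
        Real.sum_mul_le_sqrt_mul_sqrt _ _ _
    _ ≤ C * norm2 (fourierCoeffs M a t - fourierCoeffs M b s) :=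
        mul_le_mul_of_nonneg_right (Real.sqrt_le_iff.2 ⟨hC, hcoeff⟩) (Real.sqrt_nonneg _)

end

/-! ### Dual polynomials -/

section

/-- The points `t j + m` of the periodic extension of the support, rescaled by `πN` so that the
periodized kernels `valueSum N` and `slopeSum N` become `valueKernel` and `slopeKernel`. -/
def nodes (N : ℕ) {R : ℕ} (t : Fin R → ℝ) (i : Fin R × ℤ) : ℝ := π * N * (t i.1 + i.2)

variable {M N R : ℕ} {t : Fin R → ℝ}

lemma interpolant_nodes_eq_sum (hN : N ≠ 0)
    (hsep : Pairwise fun i j => 3.1 ≤ |nodes N t i - nodes N t j|) (α β : Fin R → ℂ) (x : ℝ) :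
    interpolant (nodes N t) α β (π * N * x) =
      ∑ j, (α j * (valueSum N (x - t j) : ℂ) + β j * (slopeSum N (x - t j) : ℂ)) := by
  refine HasSum.unique ?_ (hasSum_fintype _)
  refine (hasSum_interpolant hsep α β _).prod_fiberwise fun j => ?_
  have harg (m : ℤ) : π * N * x - nodes N t (j, m) = π * N * (x - t j - m) := by
    rw [nodes]
    ring
  simp only [kernelComb, harg]
  exact ((hasSum_ofReal.2 (hasSum_valueKernel hN _)).mul_left _).add
    ((hasSum_ofReal.2 (hasSum_slopeKernel hN _)).mul_left _)

lemma interpolant_nodes_mem_trigPoly (hN : N ≠ 0)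
    (hsep : Pairwise fun i j => 3.1 ≤ |nodes N t i - nodes N t j|) (α β : Fin R → ℂ) :
    (fun x => interpolant (nodes N t) α β (π * N * x)) ∈ trigPoly (2 * N) := by
  have hexpand : (fun x => interpolant (nodes N t) α β (π * N * x)) =
      ∑ j, (α j • (fun x => (valueSum N (x - t j) : ℂ)) +
        β j • (fun x => (slopeSum N (x - t j) : ℂ))) := funext fun x => by
    rw [interpolant_nodes_eq_sum hN hsep]
    simp only [Finset.sum_apply, Pi.add_apply, Pi.smul_apply, smul_eq_mul]
  rw [hexpand]
  exact Submodule.sum_mem _ fun j _ => Submodule.add_mem _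
    (Submodule.smul_mem _ _ (comp_sub_const_mem_trigPoly (valueSum_mem_trigPoly N) (t j)))
    (Submodule.smul_mem _ _ (comp_sub_const_mem_trigPoly (slopeSum_mem_trigPoly N) (t j)))

lemma exists_polynomial_eval_eq_interpolant (hN : N ≠ 0)
    (hsep : Pairwise fun i j => 3.1 ≤ |nodes N t i - nodes N t j|) (α β : Fin R → ℂ) :
    ∃ P : Polynomial ℂ, P.natDegree ≤ 4 * N ∧ ∀ x, P.eval (trigExp (-1) x) =
      interpolant (nodes N t) α β (π * N * x) * trigExp (-(2 * N : ℕ)) x := by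
  obtain ⟨P, hP, heval⟩ :=
    exists_polynomial_eval_eq_of_mem_trigPoly (interpolant_nodes_mem_trigPoly hN hsep α β)
  exact ⟨P, hP.trans (by omega), heval⟩

lemma pi_mul_sub_one_div_four_mem_Icc (hM : 257 ≤ M) :
    π * ((M - 1) / 4 : ℕ) ∈ Set.Icc (0.775 * ((M : ℝ) - 1)) (0.786 * ((M : ℝ) - 1)) := by
  have hlower : (M : ℝ) - 1 ≤ 4 * ((M - 1) / 4 : ℕ) + 3 := by
    rw [sub_le_iff_le_add]
    exact_mod_cast (by omega : M ≤ 4 * ((M - 1) / 4) + 3 + 1)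
  have hupper : 4 * ((M - 1) / 4 : ℕ) ≤ (M : ℝ) - 1 := by
    rw [le_sub_iff_add_le]
    exact_mod_cast (by omega : 4 * ((M - 1) / 4) + 1 ≤ M)
  have hM' : (257 : ℝ) ≤ M := by exact_mod_cast hM
  constructor <;> nlinarith [Real.pi_gt_d4, Real.pi_lt_d4]

lemma pairwise_le_abs_nodes_sub (hM : 257 ≤ M)
    (ht : ∀ j k, j ≠ k → 4 / ((M : ℝ) - 1) ≤ distT (t j - t k)) :
    Pairwise fun i j => 3.1 ≤ |nodes ((M - 1) / 4) t i - nodes ((M - 1) / 4) t j| := by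
  rintro ⟨j, m⟩ ⟨k, n⟩ hne
  have hscale := (pi_mul_sub_one_div_four_mem_Icc hM).1
  have hM' : (256 : ℝ) ≤ (M : ℝ) - 1 := by
    have : (257 : ℝ) ≤ M := by exact_mod_cast hM
    linarith
  set σ := π * (((M - 1) / 4 : ℕ) : ℝ)
  have hgap : 4 / ((M : ℝ) - 1) ≤ |t j - t k - (n - m : ℤ)| := by
    rcases eq_or_ne j k with rfl | hjk
    · have hnm : n - m ≠ 0 := sub_ne_zero.2 fun h => hne (by rw [h])
      rw [sub_self, zero_sub, abs_neg, ← Int.cast_abs]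
      exact ((div_le_one (by linarith)).2 (by linarith)).trans
        (by exact_mod_cast Int.one_le_abs hnm)
    · exact (ht j k hjk).trans (distT_le_abs_sub_intCast _ _)
  have hnodes : nodes ((M - 1) / 4) t (j, m) - nodes ((M - 1) / 4) t (k, n) =
      σ * (t j - t k - (n - m : ℤ)) := by
    simp only [nodes, σ]
    push_cast
    ring
  rw [hnodes, abs_mul, abs_of_nonneg (by linarith)]
  calc (3.1 : ℝ) = 0.775 * ((M : ℝ) - 1) * (4 / ((M : ℝ) - 1)) := by
        field_simp [(by linarith : 0 < (M : ℝ) - 1).ne']; norm_num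
    _ ≤ σ * |t j - t k - (n - m : ℤ)| := by gcongr

lemma sq_pi_mul_mem_Icc (hM : 257 ≤ M) (d : ℝ) :
    (π * ((M - 1) / 4 : ℕ) * d) ^ 2 ∈
      Set.Icc (0.6 * (((M : ℝ) - 1) * |d|) ^ 2) (0.618 * (((M : ℝ) - 1) * |d|) ^ 2) := by
  obtain ⟨hlower, hupper⟩ := pi_mul_sub_one_div_four_mem_Icc hM
  have hM' : (257 : ℝ) ≤ M := by exact_mod_cast hM
  have hsq_lower := pow_le_pow_left₀ (by linarith) hlower 2
  have hsq_upper := pow_le_pow_left₀ (by positivity) hupper 2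
  simp only [mul_pow, sq_abs] at hsq_lower hsq_upper ⊢
  constructor <;> nlinarith [sq_nonneg d]

lemma abs_pi_mul_le (hM : 257 ≤ M) {d : ℝ} (hd : |d| ≤ 0.3298 / ((M : ℝ) - 1)) :
    |π * ((M - 1) / 4 : ℕ) * d| ≤ 0.26 := by
  have hM' : (257 : ℝ) ≤ M := by exact_mod_cast hM
  have hd' := (le_div_iff₀ (by linarith)).1 hd
  rw [abs_mul, abs_of_nonneg (by positivity)]
  nlinarith [(pi_mul_sub_one_div_four_mem_Icc hM).2, abs_nonneg d]

lemma eval_trigExp_add_intCast_eq_interpolant {P : Polynomial ℂ} {α β : Fin R → ℂ}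
    (hP : ∀ x, P.eval (trigExp (-1) x) =
      interpolant (nodes N t) α β (π * N * x) * trigExp (-(2 * N : ℕ)) x)
    (j : Fin R) (d : ℝ) (m : ℤ) :
    P.eval (trigExp (-1) (t j + d + m)) =
      interpolant (nodes N t) α β (nodes N t (j, 0) + π * N * d) *
        trigExp (-(2 * N : ℕ)) (t j + d) := by
  have hnode : π * N * (t j + d) = nodes N t (j, 0) + π * N * d := by
    rw [nodes, Int.cast_zero, add_zero, mul_add]
  rw [trigExp_add_intCast, hP, hnode]

lemma norm_exp_I_mul_sub_le {x : ℝ} (hx : |x| ≤ 0.26) :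
    ‖exp (4 * I * x) - 1 - 4 * I * x‖ ≤ 16 * x ^ 2 := by
  have hnorm : ‖4 * I * (x : ℂ)‖ = 4 * |x| := by simp
  have hbound := exp_bound' (x := 4 * I * x) (n := 2) (by
    rw [hnorm]
    norm_num
    linarith)
  have hsum : ∑ m ∈ Finset.range 2, (4 * I * (x : ℂ)) ^ m / m.factorial = 1 + 4 * I * x := by
    simp [Finset.sum_range_succ]
  rw [hnorm, hsum, ← sub_sub, mul_pow, sq_abs, Nat.factorial_two] at hbound
  norm_num at hbound
  exact hbound

lemma norm_sub_mul_exp_I_mul_le {z v : ℂ} {x : ℝ} (hv : ‖v‖ ≤ 1) (hx : |x| ≤ 0.26)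
    (hz : ‖z - v - 4 * I * v * x‖ ≤ 8 * x ^ 2) : ‖z - v * exp (4 * I * x)‖ ≤ 24 * x ^ 2 := by
  have hsplit : z - v * exp (4 * I * x) =
      (z - v - 4 * I * v * x) - v * (exp (4 * I * x) - 1 - 4 * I * x) := by ring
  have hremainder : ‖v * (exp (4 * I * x) - 1 - 4 * I * x)‖ ≤ 1 * (16 * x ^ 2) := by
    rw [norm_mul]
    gcongr
    exact norm_exp_I_mul_sub_le hx
  rw [hsplit]
  linarith [norm_sub_le (z - v - 4 * I * v * x) (v * (exp (4 * I * x) - 1 - 4 * I * x))]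

lemma norm_eval_le_of_forall_le_distT (hM : 257 ≤ M) {P : Polynomial ℂ} {α β : Fin R → ℂ}
    (hP : ∀ x, P.eval (trigExp (-1) x) = interpolant (nodes ((M - 1) / 4) t) α β
      (π * ((M - 1) / 4 : ℕ) * x) * trigExp (-(2 * ((M - 1) / 4) : ℕ)) x)
    (hnear : ∀ j d, |d| ≤ 0.65 →
      ‖interpolant (nodes ((M - 1) / 4) t) α β (nodes ((M - 1) / 4) t (j, 0) + d)‖ ≤
        1 - 0.1 * d ^ 2)
    (hfar : ∀ x, (∀ i, 0.65 ≤ |x - nodes ((M - 1) / 4) t i|) →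
      ‖interpolant (nodes ((M - 1) / 4) t) α β x‖ ≤ 0.99)
    {x : ℝ} (hx : ∀ j, 0.3298 / ((M : ℝ) - 1) ≤ distT (t j - x)) :
    ‖P.eval (trigExp (-1) x)‖ ≤ 0.994 := by
  by_cases h : ∀ i, 0.65 ≤ |π * ((M - 1) / 4 : ℕ) * x - nodes ((M - 1) / 4) t i|
  · rw [hP, norm_mul, norm_trigExp, mul_one]
    exact (hfar _ h).trans (by norm_num)
  push Not at h
  obtain ⟨⟨j, m⟩, hlt⟩ := h
  obtain ⟨d, rfl⟩ : ∃ d, x = t j + d + m := ⟨x - t j - m, by ring⟩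
  have hd : 0.3298 / ((M : ℝ) - 1) ≤ |d| := by
    refine (hx j).trans ((distT_le_abs_sub_intCast _ (-m)).trans_eq ?_)
    rw [← abs_neg d]
    congr 1
    push_cast
    ring
  have hnode : π * ((M - 1) / 4 : ℕ) * (t j + d + m) - nodes ((M - 1) / 4) t (j, m) =
      π * ((M - 1) / 4 : ℕ) * d := by
    rw [nodes]
    ring
  rw [hnode] at hlt
  rw [eval_trigExp_add_intCast_eq_interpolant hP, norm_mul, norm_trigExp, mul_one]
  refine (hnear j _ hlt.le).trans ?_
  have hM' : (257 : ℝ) ≤ M := by exact_mod_cast hM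
  have hMd : 0.3298 ≤ ((M : ℝ) - 1) * |d| := (div_le_iff₀' (by linarith)).1 hd
  linarith [(sq_pi_mul_mem_Icc hM d).1, pow_le_pow_left₀ (by norm_num) hMd 2]

lemma exists_polynomial_eval_eq_and_norm_eval_le (hM : 257 ≤ M)
    (ht : ∀ j k, j ≠ k → 4 / ((M : ℝ) - 1) ≤ distT (t j - t k)) {c : Fin R → ℂ}
    (hc : ∀ j, ‖c j‖ = 1) :
    ∃ P : Polynomial ℂ, P.natDegree < M ∧ (∀ j, P.eval (trigExp (-1) (t j)) = c j) ∧
      (∀ j x, distT (t j - x) ≤ 0.3298 / ((M : ℝ) - 1) →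
        ‖P.eval (trigExp (-1) x)‖ ≤ 1 - 0.06 * (((M : ℝ) - 1) * distT (t j - x)) ^ 2) ∧
      ∀ x, (∀ j, 0.3298 / ((M : ℝ) - 1) ≤ distT (t j - x)) →
        ‖P.eval (trigExp (-1) x)‖ ≤ 0.994 := by
  have hsep := pairwise_le_abs_nodes_sub hM ht
  obtain ⟨α, β, hval, hnear, hfar⟩ := exists_interpolant_eq_and_norm_le
    (v := fun j => c j * trigExp (2 * ((M - 1) / 4) : ℕ) (t j)) hsep fun j => by
      rw [norm_mul, hc, norm_trigExp, mul_one]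
  obtain ⟨P, hdeg, hP⟩ := exists_polynomial_eval_eq_interpolant (by omega) hsep α β
  refine ⟨P, by omega, fun j => ?_, fun j x hx => ?_, fun x =>
    norm_eval_le_of_forall_le_distT hM hP hnear hfar⟩
  · have heval := eval_trigExp_add_intCast_eq_interpolant hP j 0 0
    simp only [mul_zero, Int.cast_zero, add_zero, hval] at heval
    rw [heval, mul_assoc, mul_comm (trigExp _ _), trigExp_neg_mul_trigExp, mul_one]
  · obtain ⟨d, m, rfl, hd⟩ := exists_eq_add_intCast_and_abs_eq_distT (t j) x
    rw [← hd] at hx ⊢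
    rw [eval_trigExp_add_intCast_eq_interpolant hP, norm_mul, norm_trigExp, mul_one]
    refine (hnear j _ ((abs_pi_mul_le hM hx).trans (by norm_num))).trans ?_
    linarith [(sq_pi_mul_mem_Icc hM d).1]

lemma norm_mul_trigExp_neg_sub (n : ℤ) (y : ℝ) (z c : ℂ) :
    ‖z * trigExp (-n) y - c‖ = ‖z - c * trigExp n y‖ := by
  have hfactor : z * trigExp (-n) y - c = trigExp (-n) y * (z - c * trigExp n y) := by
    linear_combination c * trigExp_neg_mul_trigExp n y
  rw [hfactor, norm_mul, norm_trigExp, one_mul]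

lemma exists_polynomial_norm_eval_sub_indicator_le (hM : 257 ≤ M)
    (ht : ∀ j k, j ≠ k → 4 / ((M : ℝ) - 1) ≤ distT (t j - t k)) (j₀ : Fin R) :
    ∃ P : Polynomial ℂ, P.natDegree < M ∧ (∀ x, ‖P.eval (trigExp (-1) x)‖ ≤ 11) ∧
      ∀ j x, distT (t j - x) ≤ 0.3298 / ((M : ℝ) - 1) →
        ‖P.eval (trigExp (-1) x) - (if j = j₀ then 1 else 0)‖ ≤
          15 * (((M : ℝ) - 1) * distT (t j - x)) ^ 2 := by
  have hsep := pairwise_le_abs_nodes_sub hM ht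
  set N := (M - 1) / 4
  set v : Fin R → ℂ := fun j => if j = j₀ then trigExp (2 * N : ℕ) (t j) else 0
  have hv_norm : ‖v‖ ≤ 1 := (pi_norm_le_iff_of_nonneg zero_le_one).2 fun j => by
    simp only [v]
    split <;> simp [norm_trigExp]
  have hw_norm : ‖(4 * I : ℂ) • v‖ ≤ 4 := by
    simp only [norm_smul, norm_mul, norm_I, mul_one, norm_ofNat]
    linarith
  obtain ⟨α, β, hnear, hglobal⟩ := exists_norm_interpolant_sub_le hsep hv_norm hw_norm
  obtain ⟨P, hdeg, hP⟩ := exists_polynomial_eval_eq_interpolant (by omega) hsep α β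
  refine ⟨P, by omega, fun x => ?_, fun j x hx => ?_⟩
  · rw [hP, norm_mul, norm_trigExp, mul_one]
    exact hglobal _
  · obtain ⟨d, m, rfl, hd⟩ := exists_eq_add_intCast_and_abs_eq_distT (t j) x
    rw [← hd] at hx ⊢
    have hy_le := abs_pi_mul_le hM hx
    set y := π * N * d with hy
    rw [eval_trigExp_add_intCast_eq_interpolant hP, norm_mul_trigExp_neg_sub]
    have hexp : trigExp (2 * N : ℕ) d = exp (4 * I * y) := by
      rw [trigExp, hy]
      push_cast
      ring_nf
    have hphase : (if j = j₀ then 1 else 0) * trigExp (2 * N : ℕ) (t j + d) =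
        v j * exp (4 * I * y) := by
      rw [trigExp_add, hexp, ← mul_assoc, ite_mul, one_mul, zero_mul]
    rw [hphase]
    refine (norm_sub_mul_exp_I_mul_le ((norm_le_pi_norm v j).trans hv_norm) hy_le
      (hnear j y (hy_le.trans (by norm_num)))).trans ?_
    linarith [(sq_pi_mul_mem_Icc hM d).2, sq_nonneg (((M : ℝ) - 1) * |d|)]

end

/-! ### Error bounds -/

section

variable {M R S : ℕ} {a : Fin R → ℂ} {t : Fin R → ℝ} {b : Fin S → ℂ} {s : Fin S → ℝ} {w : ℝ → ℝ}

/-- A weight that is bounded below away from the points `t j` and grows at least quadratically at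
each of them, at the resolution `1 / (M - 1)`. Integrated against `|ν|`, it controls the mass that
`ν` puts away from the support. -/
structure IsSupportWeight (M : ℕ) {R : ℕ} (t : Fin R → ℝ) (w : ℝ → ℝ) : Prop where
  near : ∀ j x, distT (t j - x) ≤ 0.3298 / ((M : ℝ) - 1) →
    0.06 * (((M : ℝ) - 1) * distT (t j - x)) ^ 2 ≤ w x
  far : ∀ x, (∀ j, 0.3298 / ((M : ℝ) - 1) ≤ distT (t j - x)) → 0.006 ≤ w x

lemma IsSupportWeight.nonneg (hw : IsSupportWeight M t w) (x : ℝ) : 0 ≤ w x := by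
  by_cases h : ∃ j, distT (t j - x) ≤ 0.3298 / ((M : ℝ) - 1)
  · obtain ⟨j, hj⟩ := h
    exact (by positivity : _ ≤ _).trans (hw.near j x hj)
  · push Not at h
    exact (by norm_num : (0 : ℝ) ≤ 0.006).trans (hw.far x fun j => (h j).le)

lemma exists_isSupportWeight (hM : 257 ≤ M)
    (ht : ∀ j k, j ≠ k → 4 / ((M : ℝ) - 1) ≤ distT (t j - t k)) (a : Fin R → ℂ) :
    ∃ w, IsSupportWeight M t w ∧ ∀ {S : ℕ} {b : Fin S → ℂ} {s : Fin S → ℝ}, tvNorm b ≤ tvNorm a →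
      ∑ k, ‖b k‖ * w (s k) ≤ norm2 (fourierCoeffs M a t - fourierCoeffs M b s) := by
  choose c hc hac using fun j => exists_norm_eq_mul_self (a j)
  obtain ⟨P, hdeg, hval, hnear, hfar⟩ := exists_polynomial_eval_eq_and_norm_eval_le hM ht hc
  have hw : IsSupportWeight M t fun x => 1 - ‖P.eval (trigExp (-1) x)‖ :=
    ⟨fun j x hx => by linarith [hnear j x hx], fun x hx => by linarith [hfar x hx]⟩
  refine ⟨_, hw, fun {S b s} htv => ?_⟩
  have hpair := norm_sum_mul_eval_sub_sum_mul_eval_le (C := 1) hdeg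
    (fun x => sub_nonneg.1 (hw.nonneg x)) a t b s
  have ha : ∑ j, a j * P.eval (trigExp (-1) (t j)) = (tvNorm a : ℂ) := by
    simp only [hval, tvNorm, ofReal_sum, hac, mul_comm]
  have hb : ‖∑ k, b k * P.eval (trigExp (-1) (s k))‖ ≤
      ∑ k, ‖b k‖ * ‖P.eval (trigExp (-1) (s k))‖ :=
    norm_sum_le_of_le _ fun k _ => (norm_mul _ _).le
  have htri := norm_sub_norm_le (∑ j, a j * P.eval (trigExp (-1) (t j)))
    (∑ k, b k * P.eval (trigExp (-1) (s k)))
  rw [ha, norm_real] at htri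
  rw [ha] at hpair
  simp only [mul_sub, mul_one, Finset.sum_sub_distrib]
  change tvNorm b - _ ≤ _
  linarith [le_abs_self (tvNorm a), Real.norm_eq_abs (tvNorm a)]

lemma mem_nearIdx {j : Fin R} {k : Fin S} :
    k ∈ nearIdx t s M j ↔ distT (t j - s k) ≤ 0.3298 / ((M : ℝ) - 1) := by
  simp [nearIdx]

lemma pairwise_disjoint_nearIdx (hM : 1 < M)
    (ht : ∀ j k, j ≠ k → 4 / ((M : ℝ) - 1) ≤ distT (t j - t k)) :
    Pairwise fun i j => Disjoint (nearIdx t s M i) (nearIdx t s M j) := by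
  refine fun i j hij => Finset.disjoint_left.2 fun k hi hj => ?_
  rw [mem_nearIdx] at hi hj
  have hlt : 0.3298 / ((M : ℝ) - 1) + 0.3298 / ((M : ℝ) - 1) < 4 / ((M : ℝ) - 1) := by
    rw [← add_div]
    exact div_lt_div_of_pos_right (by norm_num) (sub_pos.2 (by exact_mod_cast hM))
  linarith [ht i j hij, distT_sub_le_add (t i) (t j) (s k)]

lemma mul_E3_le (hw : IsSupportWeight M t w) (a : Fin R → ℂ) (b : Fin S → ℂ) (s : Fin S → ℝ) :
    0.006 * E3 a t b s M ≤ ∑ k, ‖b k‖ * w (s k) := by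
  rw [E3, Finset.mul_sum]
  refine (Finset.sum_le_sum fun k hk => ?_).trans (Finset.sum_le_sum_of_subset_of_nonneg
    (Finset.subset_univ (farIdx t s M)) fun k _ _ => mul_nonneg (norm_nonneg _) (hw.nonneg _))
  rw [mul_comm]
  gcongr
  refine hw.far _ fun j => le_of_not_ge fun h => ?_
  simp only [farIdx, Finset.mem_filter] at hk
  exact hk.2 j (mem_nearIdx.2 h)

lemma mul_E2_le (hM : 1 < M) (ht : ∀ j k, j ≠ k → 4 / ((M : ℝ) - 1) ≤ distT (t j - t k))
    (hw : IsSupportWeight M t w) (a : Fin R → ℂ) (b : Fin S → ℂ) (s : Fin S → ℝ) :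
    0.06 * ((M : ℝ) - 1) ^ 2 * E2 a t b s M ≤ ∑ k, ‖b k‖ * w (s k) := by
  have hterm (j : Fin R) : 0.06 * ((M : ℝ) - 1) ^ 2 *
      ∑ k ∈ nearIdx t s M j, ‖b k‖ * distT (t j - s k) ^ 2 ≤
        ∑ k ∈ nearIdx t s M j, ‖b k‖ * w (s k) := by
    rw [Finset.mul_sum]
    refine Finset.sum_le_sum fun k hk => ?_
    have hle := mul_le_mul_of_nonneg_left (hw.near j (s k) (mem_nearIdx.1 hk)) (norm_nonneg (b k))
    exact (by ring : _ = _).trans_le hle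
  rw [E2, Finset.mul_sum]
  refine (Finset.sum_le_sum fun j _ => hterm j).trans ?_
  rw [← Finset.sum_biUnion fun i _ j _ hij => pairwise_disjoint_nearIdx hM ht hij]
  exact Finset.sum_le_sum_of_subset_of_nonneg (Finset.subset_univ _)
    fun k _ _ => mul_nonneg (norm_nonneg _) (hw.nonneg _)

lemma norm_eval_sub_indicator_nearIdx_le (hM : 1 < M)
    (ht : ∀ j k, j ≠ k → 4 / ((M : ℝ) - 1) ≤ distT (t j - t k))
    (hw : IsSupportWeight M t w) {j₀ : Fin R} {q : ℝ → ℂ} (hq : ∀ x, ‖q x‖ ≤ 11)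
    (hq_near : ∀ j x, distT (t j - x) ≤ 0.3298 / ((M : ℝ) - 1) →
      ‖q x - (if j = j₀ then 1 else 0)‖ ≤ 15 * (((M : ℝ) - 1) * distT (t j - x)) ^ 2)
    (k : Fin S) :
    ‖q (s k) - (if k ∈ nearIdx t s M j₀ then 1 else 0)‖ ≤ 2000 * w (s k) := by
  by_cases h : ∃ j, k ∈ nearIdx t s M j
  · obtain ⟨j, hj⟩ := h
    have hiff : k ∈ nearIdx t s M j₀ ↔ j = j₀ :=
      ⟨fun h₀ => by_contra fun hne =>
        Finset.disjoint_left.1 (pairwise_disjoint_nearIdx hM ht hne) hj h₀, fun h₀ => h₀ ▸ hj⟩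
    rw [mem_nearIdx] at hj
    simp only [hiff]
    linarith [hq_near j _ hj, hw.near j _ hj, hw.nonneg (s k)]
  · push Not at h
    rw [if_neg (h j₀), sub_zero]
    linarith [hq (s k), hw.far (s k) fun j => le_of_not_ge fun hj => h j (mem_nearIdx.2 hj)]

lemma norm_sub_sum_nearIdx_le (hM : 257 ≤ M)
    (ht : ∀ j k, j ≠ k → 4 / ((M : ℝ) - 1) ≤ distT (t j - t k))
    (hw : IsSupportWeight M t w) (a : Fin R → ℂ) (b : Fin S → ℂ) (s : Fin S → ℝ) (j₀ : Fin R) :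
    ‖a j₀ - ∑ k ∈ nearIdx t s M j₀, b k‖ ≤
      11 * norm2 (fourierCoeffs M a t - fourierCoeffs M b s) +
        2000 * ∑ k, ‖b k‖ * w (s k) := by
  obtain ⟨P, hdeg, hglobal, hnear⟩ := exists_polynomial_norm_eval_sub_indicator_le hM ht j₀
  set q : ℝ → ℂ := fun x => P.eval (trigExp (-1) x)
  have hq (j : Fin R) : q (t j) = if j = j₀ then 1 else 0 := by
    have hle := hnear j (t j) (by
      rw [sub_self, distT_zero]
      exact div_nonneg (by norm_num) (sub_nonneg.2 (by exact_mod_cast (by omega : 1 ≤ M))))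
    rw [sub_self, distT_zero, mul_zero, zero_pow two_ne_zero, mul_zero] at hle
    exact sub_eq_zero.1 (norm_le_zero_iff.1 hle)
  have ha : ∑ j, a j * q (t j) = a j₀ := by simp [hq]
  have hb : ∑ k, b k * q (s k) - ∑ k ∈ nearIdx t s M j₀, b k =
      ∑ k, b k * (q (s k) - if k ∈ nearIdx t s M j₀ then 1 else 0) := by
    simp [mul_sub, Finset.sum_ite_mem]
  have hpair := norm_sum_mul_eval_sub_sum_mul_eval_le hdeg hglobal a t b s
  have herror : ‖∑ k, b k * (q (s k) - if k ∈ nearIdx t s M j₀ then 1 else 0)‖ ≤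
      2000 * ∑ k, ‖b k‖ * w (s k) := by
    rw [Finset.mul_sum]
    refine norm_sum_le_of_le _ fun k _ => ?_
    rw [norm_mul, mul_left_comm]
    gcongr
    exact norm_eval_sub_indicator_nearIdx_le (by omega) ht hw hglobal hnear k
  rw [← hb] at herror
  calc ‖a j₀ - ∑ k ∈ nearIdx t s M j₀, b k‖
      ≤ ‖∑ j, a j * q (t j) - ∑ k, b k * q (s k)‖ +
          ‖∑ k, b k * q (s k) - ∑ k ∈ nearIdx t s M j₀, b k‖ := by
        rw [ha]
        exact norm_sub_le_norm_sub_add_norm_sub _ _ _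
    _ ≤ _ := add_le_add hpair herror

lemma E1_le (hM : 257 ≤ M) (ht : ∀ j k, j ≠ k → 4 / ((M : ℝ) - 1) ≤ distT (t j - t k))
    (hw : IsSupportWeight M t w) (a : Fin R → ℂ) (b : Fin S → ℂ) (s : Fin S → ℝ) :
    E1 a t b s M ≤ 11 * norm2 (fourierCoeffs M a t - fourierCoeffs M b s) +
      2000 * ∑ k, ‖b k‖ * w (s k) := by
  have hmass : 0 ≤ ∑ k, ‖b k‖ * w (s k) :=
    Finset.sum_nonneg fun k _ => mul_nonneg (norm_nonneg _) (hw.nonneg _)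
  exact Real.iSup_le (norm_sub_sum_nearIdx_le hM ht hw a b s)
    (add_nonneg (mul_nonneg (by norm_num) (Real.sqrt_nonneg _)) (by positivity))

end

end

/-- robustness of TV-min/BLASSO, Fernandez-Granda / Azaïs et al.:
there are universal constants `C₁, C₂, C₃ > 0` such that for `M ≥ 257`,
`Δ ≥ 4/(M-1)`, `Δ`-separated `μ`, noisy data `y = 𝓕_M μ + z` with `‖z‖ ≤ ε`, and any
atomic `ν` with `‖y - 𝓕_M ν‖ ≤ ε` and `‖ν‖_TV ≤ ‖μ‖_TV`, the errors satisfy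
`𝓔_1^M ≤ C₁ ε`, `𝓔_2^M ≤ C₂ M⁻² ε`, `𝓔_3^M ≤ C₃ ε`. -/
theorem statement12 :
    ∃ C₁ C₂ C₃ : ℝ, 0 < C₁ ∧ 0 < C₂ ∧ 0 < C₃ ∧
      ∀ (M : ℕ), 257 ≤ M →
      ∀ (Δ : ℝ), 4 / ((M : ℝ) - 1) ≤ Δ →
      ∀ (R : ℕ), 1 ≤ R →
      ∀ (a : Fin R → ℂ) (t : Fin R → ℝ),
        (∀ j, t j ∈ Set.Ico (0 : ℝ) 1) → Function.Injective t →
        (∀ j k, j ≠ k → Δ ≤ distT (t j - t k)) →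
      ∀ (ε : ℝ), 0 < ε →
      ∀ (z : Fin M → ℂ), norm2 z ≤ ε →
      ∀ (S : ℕ) (b : Fin S → ℂ) (s : Fin S → ℝ),
        (∀ k, s k ∈ Set.Ico (0 : ℝ) 1) → Function.Injective s →
        norm2 (fourierCoeffs M a t + z - fourierCoeffs M b s) ≤ ε →
        tvNorm b ≤ tvNorm a →
        E1 a t b s M ≤ C₁ * ε ∧
        E2 a t b s M ≤ C₂ * ((M : ℝ) ^ 2)⁻¹ * ε ∧
        E3 a t b s M ≤ C₃ * ε := by
  refine ⟨4022, 34, 334, by norm_num, by norm_num, by norm_num, ?_⟩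
  intro M hM Δ hΔ R _ a t _ _ hsep ε hε z hz S b s _ _ hy htv
  have ht (j k) (hjk : j ≠ k) : 4 / ((M : ℝ) - 1) ≤ distT (t j - t k) :=
    hΔ.trans (hsep j k hjk)
  have hdata := norm2_sub_le_of_norm2_add_sub_le hz hy
  obtain ⟨w, hw, hmass⟩ := exists_isSupportWeight hM ht a
  have hmass_le := (hmass (s := s) htv).trans hdata
  refine ⟨?_, ?_, ?_⟩
  · linarith [E1_le hM ht hw a b s]
  · have hM' : (257 : ℝ) ≤ M := by exact_mod_cast hM
    have hE2 := (mul_E2_le (by omega) ht hw a b s).trans hmass_le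
    have hE2_nonneg : 0 ≤ E2 a t b s M := by
      unfold E2; positivity
    rw [mul_right_comm, ← div_eq_mul_inv, le_div_iff₀ (by positivity)]
    nlinarith
  · linarith [mul_E3_le hw a b s]
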